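/- arXiv:0811.3496 — 4 statements merged into one kernel-verified Lean document; each statement's English description precedes it below -/
import Mathlib

section
/- Let Γ = [γ_ij] ∈ ℝ^{p×p} be a connected interconnection and let r ∈ ℝ^p satisfy r^T Γ = 0 and r^T 1 = 1, where 1 is the all-ones vector. Then there exists a symmetric positive definite matrix Ω ∈ ℝ^{p×p} such that (Γ − 1 r^T)^T Ω + Ω (Γ − 1 r^T) = −I_p. -/
open Matrix

noncomputable section

/-- A continuous-time interconnection matrix: off-diagonal entries nonnegative and
`Γ i i = -∑_{j ≠ i} Γ i j`. -/
def IsInterconnection {p : ℕ} (Γ : Matrix (Fin p) (Fin p) ℝ) : Prop :=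
  (∀ i j, i ≠ j → 0 ≤ Γ i j) ∧
  ∀ i, Γ i i = -∑ j ∈ Finset.univ.filter (fun j => j ≠ i), Γ i j

/-- The graph of the matrix (edge `(i,j)` iff the `(i,j)` entry is positive) has a node to which
there is a directed path from every other node. -/
def ConnectedMat {p : ℕ} (Γ : Matrix (Fin p) (Fin p) ℝ) : Prop :=
  ∃ v : Fin p, ∀ u : Fin p, Relation.ReflTransGen (fun i j => 0 < Γ i j) u v

/-!
The matrix `Γ - 1 rᵀ` is Hurwitz. By Gershgorin every nonzero eigenvalue of `Γ` lies in the open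
left half-plane, and the rank-one perturbation along the eigenvector `1` introduces no eigenvalue
other than `-∑ r` (Brauer). The eigenvalue `0` does not survive: if `Γ x = (r ⬝ x) 1`, the maximum
principle forces first `r ⬝ x = 0` and then, by connectedness, `x` to be constant, hence zero.

For a Hurwitz element `a` of a C⋆-algebra the Cayley transform `m` of `a` has spectral radius less
than one and turns the Lyapunov equation into the Stein equation `p - m⋆ p m = q`, which is solved
by a convergent series of nonnegative terms. The real part of the complex solution solves the real
matrix equation.
-/

section Cayley

/-- The Cayley transform `(1 + a) * (1 - a)⁻¹`, which carries the open left half-plane to the open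
unit disc. It has its intended meaning only if `1 - a` is a unit; otherwise `Ring.inverse` makes it
zero. -/
def cayley {R : Type*} [Ring R] (a : R) : R := (1 + a) * Ring.inverse (1 - a)

theorem cayley_mul_one_sub {R : Type*} [Ring R] {a : R} (ha : IsUnit (1 - a)) :
    cayley a * (1 - a) = 1 + a := by
  rw [cayley, mul_assoc, Ring.inverse_mul_cancel _ ha, mul_one]

theorem exists_mem_spectrum_of_mem_spectrum_cayley {𝕜 A : Type*} [Field 𝕜] [NeZero (2 : 𝕜)]
    [Ring A] [Algebra 𝕜 A] {a : A} (ha : IsUnit (1 - a)) {μ : 𝕜}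
    (hμ : μ ∈ spectrum 𝕜 (cayley a)) : ∃ ν ∈ spectrum 𝕜 a, (μ + 1) * ν = μ - 1 := by
  have hfactor :
      (algebraMap 𝕜 A μ - cayley a) * (1 - a) = algebraMap 𝕜 A (μ - 1) - (μ + 1) • a := by
    rw [sub_mul, cayley_mul_one_sub ha, Algebra.algebraMap_eq_smul_one,
      Algebra.algebraMap_eq_smul_one, smul_one_mul, smul_sub, sub_smul, add_smul, one_smul,
      one_smul]
    abel
  have hsingular : ¬IsUnit (algebraMap 𝕜 A (μ - 1) - (μ + 1) • a) := by
    obtain ⟨u, hu⟩ := ha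
    rw [← hfactor, ← hu, Units.isUnit_mul_units]
    exact hμ
  have hne : μ + 1 ≠ 0 := by
    intro h
    have h_two : μ - 1 = -2 := by linear_combination h
    rw [h, zero_smul, sub_zero, h_two] at hsingular
    exact hsingular ((IsUnit.mk0 _ (neg_ne_zero.mpr two_ne_zero)).map (algebraMap 𝕜 A))
  refine ⟨(μ - 1) / (μ + 1), fun hunit => hsingular ?_, mul_div_cancel₀ _ hne⟩
  have hscale : algebraMap 𝕜 A (μ - 1) - (μ + 1) • a
      = (μ + 1) • (algebraMap 𝕜 A ((μ - 1) / (μ + 1)) - a) := by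
    rw [smul_sub, ← algebraMap.coe_smul, smul_eq_mul, mul_div_cancel₀ _ hne]
  rw [hscale]
  exact hunit.smul (Units.mk0 _ hne)

theorem star_one_sub_mul_cayley_sub_mul_one_sub {R : Type*} [Ring R] [StarRing R] {a : R}
    (ha : IsUnit (1 - a)) (p : R) :
    star (1 - a) * (p - star (cayley a) * p * cayley a) * (1 - a)
      = -(2 • (star a * p + p * a)) :=
  calc star (1 - a) * (p - star (cayley a) * p * cayley a) * (1 - a)
    _ = star (1 - a) * p * (1 - a) - star (cayley a * (1 - a)) * p * (cayley a * (1 - a)) := by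
      rw [star_mul]
      noncomm_ring
    _ = star (1 - a) * p * (1 - a) - star (1 + a) * p * (1 + a) := by
      rw [cayley_mul_one_sub ha]
    _ = -(2 • (star a * p + p * a)) := by
      rw [star_add, star_sub, star_one]
      noncomm_ring

end Cayley

section Lyapunov

/-- An element of a complex algebra is Hurwitz (stable for `x' = a x`) if its spectrum lies in the
open left half-plane. A real matrix is called Hurwitz through its complexification. -/
def IsHurwitz {A : Type*} [Ring A] [Algebra ℂ A] (a : A) : Prop :=
  ∀ μ ∈ spectrum ℂ a, μ.re < 0

theorem IsHurwitz.isUnit_one_sub {A : Type*} [Ring A] [Algebra ℂ A] {a : A} (ha : IsHurwitz a) :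
    IsUnit (1 - a) := by
  by_contra h
  have hre := ha 1 (by rwa [spectrum.mem_iff, map_one])
  norm_num at hre

theorem norm_lt_one_of_add_one_mul_eq_sub_one {μ ν : ℂ} (h : (μ + 1) * ν = μ - 1)
    (hν : ν.re < 0) : ‖μ‖ < 1 := by
  have hμ : μ * (1 - ν) = 1 + ν := by linear_combination -h
  have hlt : ‖1 + ν‖ < ‖1 - ν‖ := by
    rw [← sq_lt_sq₀ (norm_nonneg _) (norm_nonneg _), Complex.sq_norm, Complex.sq_norm,
      Complex.normSq_apply, Complex.normSq_apply]
    simp only [Complex.add_re, Complex.add_im, Complex.sub_re, Complex.sub_im, Complex.one_re,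
      Complex.one_im]
    linarith
  rw [← hμ, norm_mul] at hlt
  exact lt_of_mul_lt_mul_right (by rwa [one_mul]) (norm_nonneg (1 - ν))

theorem IsHurwitz.spectralRadius_cayley_lt_one {A : Type*} [NormedRing A] [NormedAlgebra ℂ A]
    [CompleteSpace A] {a : A} (ha : IsHurwitz a) : spectralRadius ℂ (cayley a) < 1 := by
  nontriviality A
  refine spectrum.spectralRadius_lt_of_forall_lt (r := 1) _ fun μ hμ => ?_
  obtain ⟨ν, hν, h⟩ := exists_mem_spectrum_of_mem_spectrum_cayley ha.isUnit_one_sub hμ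
  exact norm_lt_one_of_add_one_mul_eq_sub_one h (ha ν hν)

theorem summable_norm_pow_sq_of_spectralRadius_lt_one {A : Type*} [NormedRing A]
    [NormedAlgebra ℂ A] [CompleteSpace A] {a : A} (ha : spectralRadius ℂ a < 1) :
    Summable fun k => ‖a ^ k‖ ^ 2 := by
  obtain ⟨ρ, haρ, hρ⟩ := ENNReal.lt_iff_exists_nnreal_btwn.mp ha
  have hρ1 : (ρ : ℝ) < 1 := by exact_mod_cast hρ
  have hpow : ∀ᶠ k : ℕ in Filter.atTop, ‖a ^ k‖ ≤ (ρ : ℝ) ^ k := by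
    filter_upwards [(spectrum.pow_nnnorm_pow_one_div_tendsto_nhds_spectralRadius
      a).eventually_lt_const haρ, Filter.eventually_gt_atTop 0] with k hk hk0
    rw [one_div] at hk
    have hle := (ENNReal.rpow_inv_le_iff (by exact_mod_cast hk0 : (0 : ℝ) < k)).mp hk.le
    rw [ENNReal.rpow_natCast] at hle
    exact_mod_cast hle
  have hgeom : Summable fun k : ℕ => ((ρ : ℝ) ^ 2) ^ k :=
    summable_geometric_of_lt_one (by positivity) (pow_lt_one₀ ρ.2 hρ1 two_ne_zero)
  refine hgeom.of_norm_bounded_eventually_nat ?_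
  filter_upwards [hpow] with k hk
  rw [norm_pow, norm_norm, pow_right_comm]
  gcongr

variable {A : Type*} [CStarAlgebra A] [PartialOrder A] [StarOrderedRing A]

-- The solution of the Stein equation is the series `∑ (mᵏ)⋆ q mᵏ`.
theorem exists_isStrictlyPositive_sub_star_mul_mul_eq {m q : A} (hm : spectralRadius ℂ m < 1)
    (hq : IsStrictlyPositive q) : ∃ p, IsStrictlyPositive p ∧ p - star m * p * m = q := by
  set F : ℕ → A := fun k => star (m ^ k) * q * m ^ k with hF
  have hsum : Summable F := by
    refine ((summable_norm_pow_sq_of_spectralRadius_lt_one hm).mul_left ‖q‖).of_norm_bounded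
      fun k => ?_
    calc ‖F k‖ ≤ ‖star (m ^ k)‖ * ‖q‖ * ‖m ^ k‖ := norm_mul₃_le
      _ = ‖q‖ * ‖m ^ k‖ ^ 2 := by rw [norm_star]; ring
  have hstein : ∑' k, F k = q + star m * (∑' k, F k) * m := by
    rw [← hsum.tsum_mul_left, ← (hsum.mul_left _).tsum_mul_right, hsum.tsum_eq_zero_add]
    simp only [hF, pow_zero, star_one, one_mul, mul_one, pow_succ, star_mul, mul_assoc]
  have hnonneg : 0 ≤ ∑' k, F k :=
    tsum_nonneg fun k => star_left_conjugate_nonneg hq.nonneg (m ^ k)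
  refine ⟨∑' k, F k, ?_, sub_eq_of_eq_add hstein⟩
  rw [hstein]
  exact hq.add_nonneg (star_left_conjugate_nonneg hnonneg m)

theorem IsHurwitz.exists_isStrictlyPositive_lyapunov {a q : A} (ha : IsHurwitz a)
    (hq : IsStrictlyPositive q) : ∃ p, IsStrictlyPositive p ∧ star a * p + p * a = -q := by
  have hunit : IsUnit (1 - a) := ha.isUnit_one_sub
  set b := Ring.inverse (1 - a)
  have hq' : IsStrictlyPositive (star b * ((2 : ℝ) • q) * b) :=
    hunit.ringInverse.isStrictlyPositive_star_left_conjugate_iff.mpr (hq.smul two_pos)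
  obtain ⟨p, hp, hstein⟩ :=
    exists_isStrictlyPositive_sub_star_mul_mul_eq ha.spectralRadius_cayley_lt_one hq'
  have hb_mul : b * (1 - a) = 1 := Ring.inverse_mul_cancel _ hunit
  have htwo : (2 : ℝ) • (star a * p + p * a) = (2 : ℝ) • -q :=
    calc (2 : ℝ) • (star a * p + p * a)
      _ = -(star (1 - a) * (p - star (cayley a) * p * cayley a) * (1 - a)) := by
        rw [star_one_sub_mul_cayley_sub_mul_one_sub hunit, neg_neg, two_smul, two_smul]
      _ = -(star (b * (1 - a)) * ((2 : ℝ) • q) * (b * (1 - a))) := by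
        rw [hstein, star_mul]
        simp only [mul_assoc]
      _ = (2 : ℝ) • -q := by rw [hb_mul, star_one, one_mul, mul_one, smul_neg]
  exact ⟨p, hp, smul_right_injective _ (two_ne_zero' ℝ) htwo⟩

end Lyapunov

section RealMatrix

open scoped ComplexOrder

variable {n : Type*}

theorem posDef_map_algebraMap [Finite n] {𝕜 : Type*} [RCLike 𝕜] {A : Matrix n n ℝ} (hA : A.PosDef) :
    (A.map (algebraMap ℝ 𝕜)).PosDef := by
  classical
  cases nonempty_fintype n
  open scoped Matrix.Norms.L2Operator MatrixOrder in
  obtain ⟨B, rfl⟩ := CStarAlgebra.nonneg_iff_eq_star_mul_self.mp hA.posSemidef.nonneg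
  rw [star_eq_conjTranspose] at hA ⊢
  have hmap : (Bᴴ * B).map (algebraMap ℝ 𝕜)
      = (B.map (algebraMap ℝ 𝕜))ᴴ * B.map (algebraMap ℝ 𝕜) := by
    rw [Matrix.map_mul, conjTranspose_map _ fun x => by simp]
  have hunit : IsUnit ((Bᴴ * B).map (algebraMap ℝ 𝕜)) :=
    hA.isUnit.map (algebraMap ℝ 𝕜).mapMatrix
  refine PosSemidef.posDef_iff_isUnit ?_ |>.mpr hunit
  rw [hmap]
  exact posSemidef_conjTranspose_mul_self _

theorem posDef_map_re [Finite n] {𝕜 : Type*} [RCLike 𝕜] {P : Matrix n n 𝕜} (hP : P.PosDef) :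
    (P.map RCLike.re).PosDef := by
  cases nonempty_fintype n
  refine .of_dotProduct_mulVec_pos ?_ fun x hx => ?_
  · ext i j
    simpa using congrArg RCLike.re (hP.isHermitian.apply i j)
  · have hx' : (fun i => (x i : 𝕜)) ≠ 0 := fun h =>
      hx (funext fun i => RCLike.ofReal_eq_zero.mp (congrFun h i))
    simpa [dotProduct, mulVec, Finset.mul_sum] using hP.re_dotProduct_pos hx'

theorem exists_posDef_lyapunov [Fintype n] [DecidableEq n] {A Q : Matrix n n ℝ}
    (hA : IsHurwitz (A.map (algebraMap ℝ ℂ))) (hQ : Q.PosDef) :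
    ∃ P : Matrix n n ℝ, P.PosDef ∧ Aᵀ * P + P * A = -Q := by
  open scoped Matrix.Norms.L2Operator MatrixOrder in
  obtain ⟨P, hP, heq⟩ := hA.exists_isStrictlyPositive_lyapunov
    (posDef_map_algebraMap (𝕜 := ℂ) hQ).isStrictlyPositive
  refine ⟨P.map Complex.re, posDef_map_re hP.posDef, ?_⟩
  ext i j
  simpa [mul_apply, star_eq_conjTranspose] using congrArg Complex.re (congrFun₂ heq i j)

end RealMatrix

section RankOne

variable {K n : Type*} [Field K] [Fintype n] [DecidableEq n]

theorem mem_spectrum_iff_exists_vecMul_eq_smul {A : Matrix n n K} {μ : K} :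
    μ ∈ spectrum K A ↔ ∃ y ≠ 0, y ᵥ* A = μ • y := by
  rw [spectrum.mem_iff, isUnit_iff_isUnit_det, isUnit_iff_ne_zero, not_not,
    ← exists_vecMul_eq_zero_iff]
  simp only [vecMul_sub, Algebra.algebraMap_eq_smul_one, vecMul_smul, vecMul_one, sub_eq_zero,
    eq_comm]

-- A left eigenvector either annihilates `u`, and then does not see the perturbation, or it pins
-- down the eigenvalue through its pairing with `u`.
theorem eq_sub_or_mem_spectrum_of_mem_spectrum_sub_vecMulVec {A : Matrix n n K} {u r : n → K}
    {c μ : K} (hu : A *ᵥ u = c • u) (hμ : μ ∈ spectrum K (A - vecMulVec u r)) :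
    μ = c - r ⬝ᵥ u ∨ μ ∈ spectrum K A := by
  obtain ⟨y, hy0, hy⟩ := mem_spectrum_iff_exists_vecMul_eq_smul.mp hμ
  rw [vecMul_sub, vecMul_vecMulVec] at hy
  by_cases hyu : y ⬝ᵥ u = 0
  · right
    exact mem_spectrum_iff_exists_vecMul_eq_smul.mpr ⟨y, hy0, by simpa [hyu] using hy⟩
  · left
    have hpair : c * (y ⬝ᵥ u) - (y ⬝ᵥ u) * (r ⬝ᵥ u) = μ * (y ⬝ᵥ u) := by
      simpa [sub_dotProduct, ← dotProduct_mulVec, hu] using congrArg (· ⬝ᵥ u) hy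
    exact mul_right_cancel₀ hyu (by linear_combination -hpair)

end RankOne

theorem re_neg_or_eq_zero_of_norm_add_le {μ : ℂ} {d : ℝ} (h : ‖μ + d‖ ≤ d) :
    μ.re < 0 ∨ μ = 0 := by
  refine or_iff_not_imp_left.mpr fun hre => Complex.normSq_eq_zero.mp ?_
  have hd : 0 ≤ d * μ.re := mul_nonneg ((norm_nonneg _).trans h) (not_lt.mp hre)
  have hsq : ‖μ + d‖ ^ 2 ≤ d ^ 2 := by gcongr
  have hexpand : ‖μ + d‖ ^ 2 = Complex.normSq μ + 2 * (d * μ.re) + d ^ 2 := by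
    simp only [Complex.sq_norm, Complex.normSq_apply, Complex.add_re, Complex.add_im,
      Complex.ofReal_re, Complex.ofReal_im]
    ring
  exact le_antisymm (by linarith) (Complex.normSq_nonneg μ)

section RateMatrix

variable {n R : Type*} [Fintype n]

/-- A rate matrix (generator of a continuous-time Markov chain): nonnegative off-diagonal entries
and zero row sums. It extends `IsInterconnection` to arbitrary finite index types and ordered
rings. -/
structure IsRateMatrix [Ring R] [LE R] (Γ : Matrix n n R) : Prop where
  nonneg : ∀ i j, i ≠ j → 0 ≤ Γ i j
  mulVec_one : Γ *ᵥ 1 = 0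

namespace IsRateMatrix

theorem sum_row_eq_zero [Ring R] [LE R] {Γ : Matrix n n R} (hΓ : IsRateMatrix Γ) (i : n) :
    ∑ j, Γ i j = 0 := by
  simpa [mulVec, dotProduct] using congrFun hΓ.mulVec_one i

theorem mulVec_apply [Ring R] [LE R] {Γ : Matrix n n R} (hΓ : IsRateMatrix Γ) (x : n → R) (i : n) :
    (Γ *ᵥ x) i = ∑ j, Γ i j * (x j - x i) := by
  simp [mulVec, dotProduct, mul_sub, Finset.sum_sub_distrib, ← Finset.sum_mul, hΓ.sum_row_eq_zero]

section MaximumPrinciple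

variable [Ring R] [LinearOrder R] [IsStrictOrderedRing R] {Γ : Matrix n n R} {x : n → R} {i : n}

theorem apply_mul_sub_nonpos (hΓ : IsRateMatrix Γ) (hi : ∀ j, x j ≤ x i) (j : n) :
    Γ i j * (x j - x i) ≤ 0 := by
  obtain rfl | hij := eq_or_ne i j
  · simp
  · exact mul_nonpos_of_nonneg_of_nonpos (hΓ.nonneg i j hij) (sub_nonpos.mpr (hi j))

theorem mulVec_apply_nonpos (hΓ : IsRateMatrix Γ) (hi : ∀ j, x j ≤ x i) : (Γ *ᵥ x) i ≤ 0 := by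
  rw [hΓ.mulVec_apply]
  exact Finset.sum_nonpos fun j _ => hΓ.apply_mul_sub_nonpos hi j

theorem nonpos_of_forall_le_mulVec [Nonempty n] (hΓ : IsRateMatrix Γ) {s : R}
    (hs : ∀ i, s ≤ (Γ *ᵥ x) i) : s ≤ 0 := by
  obtain ⟨i, hi⟩ := Finite.exists_max x
  exact (hs i).trans (hΓ.mulVec_apply_nonpos hi)

theorem apply_eq_of_pos (hΓ : IsRateMatrix Γ) (hx : 0 ≤ (Γ *ᵥ x) i) (hi : ∀ j, x j ≤ x i) {j : n}
    (hij : 0 < Γ i j) : x j = x i := by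
  have hsum : ∑ j, Γ i j * (x j - x i) = 0 := by
    rw [← hΓ.mulVec_apply]
    exact (hΓ.mulVec_apply_nonpos hi).antisymm hx
  have hterm : Γ i j * (x j - x i) = 0 :=
    (Finset.sum_eq_zero_iff_of_nonpos fun j _ => hΓ.apply_mul_sub_nonpos hi j).mp hsum j
      (Finset.mem_univ j)
  exact sub_eq_zero.mp ((mul_eq_zero.mp hterm).resolve_left hij.ne')

theorem apply_eq_of_reflTransGen (hΓ : IsRateMatrix Γ) (hx : 0 ≤ Γ *ᵥ x) (hi : ∀ j, x j ≤ x i)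
    {j : n} (hij : Relation.ReflTransGen (fun i j => 0 < Γ i j) i j) : x j = x i := by
  induction hij with
  | refl => rfl
  | @tail k _ _ hedge ih => rw [hΓ.apply_eq_of_pos (hx k) (by rwa [ih]) hedge, ih]

variable {v : n} (hv : ∀ u, Relation.ReflTransGen (fun i j => 0 < Γ i j) u v)
include hv

theorem apply_le_apply_sink (hΓ : IsRateMatrix Γ) (hx : 0 ≤ Γ *ᵥ x) (j : n) : x j ≤ x v := by
  have : Nonempty n := ⟨v⟩
  obtain ⟨i, hi⟩ := Finite.exists_max x
  exact (hi j).trans_eq (hΓ.apply_eq_of_reflTransGen hx hi (hv i)).symm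

theorem apply_eq_apply_sink (hΓ : IsRateMatrix Γ) (hx : Γ *ᵥ x = 0) (j : n) : x j = x v := by
  have hneg : Γ *ᵥ -x = 0 := by rw [mulVec_neg, hx, neg_zero]
  exact (hΓ.apply_le_apply_sink hv hx.ge j).antisymm
    (neg_le_neg_iff.mp (hΓ.apply_le_apply_sink hv hneg.ge j))

end MaximumPrinciple

theorem isUnit_sub_vecMulVec_one [Field R] [LinearOrder R] [IsStrictOrderedRing R]
    [DecidableEq n] {Γ : Matrix n n R} (hΓ : IsRateMatrix Γ) {v : n}
    (hv : ∀ u, Relation.ReflTransGen (fun i j => 0 < Γ i j) u v) {r : n → R}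
    (hr : ∑ i, r i ≠ 0) : IsUnit (Γ - vecMulVec 1 r) := by
  have : Nonempty n := ⟨v⟩
  refine mulVec_injective_iff_isUnit.mp ((injective_iff_map_eq_zero
    (Γ - vecMulVec 1 r).mulVecLin).mpr fun x (hx : (Γ - vecMulVec 1 r) *ᵥ x = 0) => ?_)
  have hΓx : ∀ i, (Γ *ᵥ x) i = r ⬝ᵥ x := by
    intro i
    rw [sub_mulVec, vecMulVec_mulVec, sub_eq_zero] at hx
    simp [hx]
  have hrx : r ⬝ᵥ x = 0 := by
    refine (hΓ.nonpos_of_forall_le_mulVec fun i => (hΓx i).ge).antisymm ?_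
    refine neg_nonpos.mp (hΓ.nonpos_of_forall_le_mulVec (x := -x) fun i => ?_)
    rw [mulVec_neg, Pi.neg_apply, hΓx]
  have hconst : ∀ j, x j = x v :=
    hΓ.apply_eq_apply_sink hv (funext fun i => (hΓx i).trans hrx)
  have hxv : (∑ i, r i) * x v = 0 := by
    rw [Finset.sum_mul, ← hrx]
    exact Finset.sum_congr rfl fun i _ => by rw [hconst i]
  exact funext fun j => (hconst j).trans ((mul_eq_zero.mp hxv).resolve_left hr)

section Spectrum

variable [DecidableEq n] {Γ : Matrix n n ℝ}

theorem re_neg_or_eq_zero_of_mem_spectrum (hΓ : IsRateMatrix Γ) {μ : ℂ}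
    (hμ : μ ∈ spectrum ℂ (Γ.map (algebraMap ℝ ℂ))) : μ.re < 0 ∨ μ = 0 := by
  rw [← spectrum_toLin', ← Module.End.hasEigenvalue_iff_mem_spectrum] at hμ
  obtain ⟨k, hk⟩ := eigenvalue_mem_ball hμ
  have hdiag : ∑ j ∈ Finset.univ.erase k, Γ k j = -Γ k k := by
    have hrow := hΓ.sum_row_eq_zero k
    rw [← Finset.add_sum_erase _ _ (Finset.mem_univ k)] at hrow
    linarith
  have hradius : ∑ j ∈ Finset.univ.erase k, ‖Γ.map (algebraMap ℝ ℂ) k j‖ = -Γ k k := by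
    rw [← hdiag]
    refine Finset.sum_congr rfl fun j hj => ?_
    rw [map_apply, norm_algebraMap', Real.norm_of_nonneg]
    exact hΓ.nonneg k j (Finset.ne_of_mem_erase hj).symm
  rw [hradius, mem_closedBall_iff_norm, map_apply, Complex.coe_algebraMap, sub_eq_add_neg,
    ← Complex.ofReal_neg] at hk
  exact re_neg_or_eq_zero_of_norm_add_le hk

theorem isHurwitz_sub_vecMulVec_one (hΓ : IsRateMatrix Γ) {v : n}
    (hv : ∀ u, Relation.ReflTransGen (fun i j => 0 < Γ i j) u v) {r : n → ℝ}
    (hr : 0 < ∑ i, r i) : IsHurwitz ((Γ - vecMulVec 1 r).map (algebraMap ℝ ℂ)) := by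
  intro μ hμ
  have hμ0 : μ ≠ 0 := by
    rintro rfl
    exact spectrum.zero_notMem ℂ
      ((hΓ.isUnit_sub_vecMulVec_one hv hr.ne').map (algebraMap ℝ ℂ).mapMatrix) hμ
  have hmap : (Γ - vecMulVec 1 r).map (algebraMap ℝ ℂ)
      = Γ.map (algebraMap ℝ ℂ) - vecMulVec 1 (fun i => (r i : ℂ)) := by
    ext i j
    simp
  have hone : Γ.map (algebraMap ℝ ℂ) *ᵥ 1 = (0 : ℂ) • 1 := by
    ext i
    simpa [mulVec, dotProduct] using congrArg Complex.ofReal (congrFun hΓ.mulVec_one i)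
  rw [hmap] at hμ
  obtain rfl | hμΓ := eq_sub_or_mem_spectrum_of_mem_spectrum_sub_vecMulVec hone hμ
  · simpa [dotProduct] using hr
  · exact (hΓ.re_neg_or_eq_zero_of_mem_spectrum hμΓ).resolve_right hμ0

end Spectrum

end IsRateMatrix

theorem IsInterconnection.isRateMatrix {p : ℕ} {Γ : Matrix (Fin p) (Fin p) ℝ}
    (hΓ : IsInterconnection Γ) : IsRateMatrix Γ where
  nonneg := hΓ.1
  mulVec_one := by
    ext i
    have hrow := hΓ.2 i
    rw [Finset.filter_ne', eq_neg_iff_add_eq_zero,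
      Finset.add_sum_erase _ _ (Finset.mem_univ i)] at hrow
    simpa [mulVec, dotProduct] using hrow

end RateMatrix

theorem stmt0_general {n : Type*} [Fintype n] {Γ : Matrix n n ℝ}
    (hΓ : IsRateMatrix Γ) {v : n} (hv : ∀ u, Relation.ReflTransGen (fun i j => 0 < Γ i j) u v)
    {r : n → ℝ} (hr : 0 < ∑ i, r i) {Q : Matrix n n ℝ} (hQ : Q.PosDef) :
    ∃ Ω : Matrix n n ℝ, Ω.IsSymm ∧ Ω.PosDef ∧
      (Γ - vecMulVec 1 r)ᵀ * Ω + Ω * (Γ - vecMulVec 1 r) = -Q := by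
  classical
  obtain ⟨Ω, hΩ, heq⟩ := exists_posDef_lyapunov (hΓ.isHurwitz_sub_vecMulVec_one hv hr) hQ
  exact ⟨Ω, isHermitian_iff_isSymm.mp hΩ.isHermitian, hΩ, heq⟩

theorem stmt0 {p : ℕ} (Γ : Matrix (Fin p) (Fin p) ℝ)
    (hΓ : IsInterconnection Γ) (hconn : ConnectedMat Γ)
    (r : Fin p → ℝ) (hr1 : Matrix.vecMul r Γ = 0) (hr2 : ∑ i, r i = 1) :
    ∃ Ω : Matrix (Fin p) (Fin p) ℝ, Ω.IsSymm ∧ Ω.PosDef ∧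
      (Γ - vecMulVec (fun _ => (1 : ℝ)) r)ᵀ * Ω + Ω * (Γ - vecMulVec (fun _ => (1 : ℝ)) r)
        = -1 := by
  obtain ⟨v, hv⟩ := hconn
  exact stmt0_general hΓ.isRateMatrix hv (hr2 ▸ one_pos) PosDef.one
end
end

section
/- Let Γ ∈ ℝ^{p×p} be a connected interconnection, r ∈ ℝ^p satisfy r^T Γ = 0 and r^T 1 = 1, and Ω ∈ ℝ^{p×p} be symmetric positive definite with (Γ − 1 r^T)^T Ω + Ω (Γ − 1 r^T) = −I_p. Define V(x) := x^T (Ω ⊗ I_n) x for x ∈ ℝ^{np}. Then for every function Q : ℝ≥0 → Q_n (Riemann-integrable) and every solution x : ℝ≥0 → ℝ^{np} of ẋ(t) = (Γ ⊗ Q_t) x(t), setting x̄ := (1 r^T ⊗ I_n) x(0), one has d/dt V(x(t) − x̄) = −(x(t) − x̄)^T (I_p ⊗ Q_t)(x(t) − x̄) for all t ≥ 0. -/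
open Matrix MeasureTheory Filter
open scoped Kronecker

noncomputable section

/-- Euclidean norm of a vector. -/
def eunorm {ι : Type*} [Fintype ι] (v : ι → ℝ) : ℝ := Real.sqrt (∑ i, v i ^ 2)

/-- Spectral (induced 2-) norm of a matrix. -/
def specNorm {m n : Type*} [Fintype m] [Fintype n] (M : Matrix m n ℝ) : ℝ :=
  sSup {c : ℝ | ∃ v : n → ℝ, eunorm v ≤ 1 ∧ c = eunorm (M.mulVec v)}

/-- Smallest singular value of a matrix. -/
def sigmaMin {m n : Type*} [Fintype m] [Fintype n] (M : Matrix m n ℝ) : ℝ :=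
  sInf {c : ℝ | ∃ v : n → ℝ, eunorm v = 1 ∧ c = eunorm (M.mulVec v)}

/-- Largest singular value of a matrix. -/
def sigmaMax {m n : Type*} [Fintype m] [Fintype n] (M : Matrix m n ℝ) : ℝ :=
  sSup {c : ℝ | ∃ v : n → ℝ, eunorm v = 1 ∧ c = eunorm (M.mulVec v)}

/-- Membership in `Q̄_n`: symmetric positive semidefinite with spectral norm at most 1. -/
def InQbar {n : ℕ} (R : Matrix (Fin n) (Fin n) ℝ) : Prop :=
  R.PosSemidef ∧ specNorm R ≤ 1

/-- `δ(ε, T) = min{ε/2, ε³/(240 T⁵)}`. -/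
def deltaCT (ε T : ℝ) : ℝ := min (ε / 2) (ε ^ 3 / (240 * T ^ 5))

/-- Sufficient excitation for `Q : ℝ≥0 → Q_n`. -/
def SuffExcitingCT {n : ℕ} (Q : ℝ → Matrix (Fin n) (Fin n) ℝ) : Prop :=
  ∃ ε T : ℕ → ℝ, (∀ i, 0 < ε i) ∧ (∀ i, 0 < T i) ∧
    (∀ i, ε i ≤ sigmaMin (Matrix.of fun a b =>
      ∫ t in (∑ j ∈ Finset.range i, T j)..((∑ j ∈ Finset.range i, T j) + T i), Q t a b)) ∧
    Tendsto (fun N => ∑ i ∈ Finset.range N, deltaCT (ε i) (T i)) atTop atTop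

/-- Persistence of excitation for `Q : ℝ≥0 → Q_n`. -/
def PersExcitingCT {n : ℕ} (Q : ℝ → Matrix (Fin n) (Fin n) ℝ) : Prop :=
  ∃ ε T : ℝ, 0 < ε ∧ 0 < T ∧ ∀ t : ℝ, 0 ≤ t →
    ε ≤ sigmaMin (Matrix.of fun a b => ∫ s in t..(t + T), Q s a b)

/-!
`P = 1 rᵀ` is an idempotent with `P Γ = Γ P = 0`. From `P Γ = 0` the consensus component
`(P ⊗ I) x` is conserved, so the deviation `y = x - x̄` lies in the kernel of `P ⊗ I`; from
`Γ P = 0` it solves the same equation `ẏ = (Γ ⊗ Q) y`. On that kernel `Γ ⊗ Q` acts as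
`(Γ - P) ⊗ Q`, and for symmetric `Q` the Lyapunov equation for `Γ - P` tensors with `Q` to give
the derivative of `V(y)`.
-/

section Derivatives

variable {𝕜 ι κ : Type*} [NontriviallyNormedField 𝕜] [Fintype ι]

lemma hasDerivAt_dotProduct {u v : 𝕜 → ι → 𝕜} {u' v' : ι → 𝕜} {t : 𝕜}
    (hu : HasDerivAt u u' t) (hv : HasDerivAt v v' t) :
    HasDerivAt (fun s => u s ⬝ᵥ v s) (u' ⬝ᵥ v t + u t ⬝ᵥ v') t := by
  simpa only [dotProduct, Finset.sum_add_distrib] using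
    HasDerivAt.fun_sum fun i _ => (hasDerivAt_pi.1 hu i).fun_mul (hasDerivAt_pi.1 hv i)

lemma hasDerivAt_mulVec [Finite κ] (A : Matrix κ ι 𝕜) {u : 𝕜 → ι → 𝕜} {u' : ι → 𝕜} {t : 𝕜}
    (hu : HasDerivAt u u' t) : HasDerivAt (fun s => A *ᵥ u s) (A *ᵥ u') t := by
  cases nonempty_fintype κ
  exact hasDerivAt_pi.2 fun k =>
    HasDerivAt.fun_sum fun j _ => (hasDerivAt_pi.1 hu j).const_mul (A k j)

lemma hasDerivAt_dotProduct_mulVec_self (W M : Matrix ι ι 𝕜) {y : 𝕜 → ι → 𝕜} {t : 𝕜}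
    (hy : HasDerivAt y (M *ᵥ y t) t) :
    HasDerivAt (fun s => y s ⬝ᵥ W *ᵥ y s) (y t ⬝ᵥ (Mᵀ * W + W * M) *ᵥ y t) t := by
  have hsplit : y t ⬝ᵥ (Mᵀ * W + W * M) *ᵥ y t =
      M *ᵥ y t ⬝ᵥ W *ᵥ y t + y t ⬝ᵥ W *ᵥ M *ᵥ y t := by
    rw [add_mulVec, dotProduct_add, ← mulVec_mulVec, ← mulVec_mulVec, dotProduct_mulVec (y t) Mᵀ,
      vecMul_transpose]
  rw [hsplit]
  exact hasDerivAt_dotProduct hy (hasDerivAt_mulVec W hy)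

end Derivatives

section LinearFlow

variable {ι κ : Type*} [Fintype ι] [Finite κ] {M : ℝ → Matrix ι ι ℝ} {x : ℝ → ι → ℝ} {a : ℝ}

lemma mulVec_eq_mulVec_initial {P : Matrix κ ι ℝ}
    (hx : ∀ t, a ≤ t → HasDerivAt x (M t *ᵥ x t) t) (hPM : ∀ t, a ≤ t → P * M t = 0)
    {t : ℝ} (ht : a ≤ t) : P *ᵥ x t = P *ᵥ x a := by
  cases nonempty_fintype κ
  have hconst : ∀ s, a ≤ s → HasDerivAt (fun s => P *ᵥ x s) 0 s := fun s hs => by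
    simpa only [mulVec_mulVec, hPM s hs, zero_mulVec] using hasDerivAt_mulVec P (hx s hs)
  exact constant_of_has_deriv_right_zero
    (fun s hs => (hconst s hs.1).continuousAt.continuousWithinAt)
    (fun s hs => (hconst s hs.1).hasDerivWithinAt) t ⟨ht, le_rfl⟩

lemma mulVec_sub_mulVec_initial_eq_zero {P : Matrix ι ι ℝ} (hP : IsIdempotentElem P)
    (hx : ∀ t, a ≤ t → HasDerivAt x (M t *ᵥ x t) t) (hPM : ∀ t, a ≤ t → P * M t = 0)
    {t : ℝ} (ht : a ≤ t) : P *ᵥ (x t - P *ᵥ x a) = 0 := by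
  rw [mulVec_sub, mulVec_mulVec, hP.eq, mulVec_eq_mulVec_initial hx hPM ht, sub_self]

lemma hasDerivAt_sub_of_mulVec_eq_zero {A : Matrix ι ι ℝ} {c : ι → ℝ} {t : ℝ}
    (hx : HasDerivAt x (A *ᵥ x t) t) (hc : A *ᵥ c = 0) :
    HasDerivAt (fun s => x s - c) (A *ᵥ (x t - c)) t := by
  simpa only [mulVec_sub, hc, sub_zero] using hx.sub_const c

end LinearFlow

section Kronecker

lemma neg_kronecker {R l m n p : Type*} [Mul R] [HasDistribNeg R] (A : Matrix l m R)
    (B : Matrix n p R) : (-A) ⊗ₖ B = -(A ⊗ₖ B) :=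
  Matrix.ext fun _ _ => neg_mul _ _

variable {R ι κ : Type*} [Fintype ι] [Fintype κ] [DecidableEq κ]

lemma transpose_kronecker_mul_add_mul_kronecker [CommSemiring R] (A Ω : Matrix ι ι R)
    {B : Matrix κ κ R} (hB : B.IsSymm) :
    (A ⊗ₖ B)ᵀ * (Ω ⊗ₖ (1 : Matrix κ κ R)) + (Ω ⊗ₖ (1 : Matrix κ κ R)) * (A ⊗ₖ B) =
      (Aᵀ * Ω + Ω * A) ⊗ₖ B := by
  rw [← kroneckerMap_transpose, hB.eq, ← mul_kronecker_mul, ← mul_kronecker_mul, one_mul, mul_one,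
    ← add_kronecker]

lemma kronecker_mulVec_eq_zero [CommSemiring R] {P : Matrix ι ι R} (B : Matrix κ κ R)
    {y : ι × κ → R} (hy : (P ⊗ₖ (1 : Matrix κ κ R)) *ᵥ y = 0) : (P ⊗ₖ B) *ᵥ y = 0 := by
  classical
  have hfactor : P ⊗ₖ B = ((1 : Matrix ι ι R) ⊗ₖ B) * (P ⊗ₖ (1 : Matrix κ κ R)) := by
    rw [← mul_kronecker_mul, one_mul, mul_one]
  rw [hfactor, ← mulVec_mulVec, hy, mulVec_zero]

lemma sub_kronecker_mulVec_of_eq_zero [CommRing R] (A : Matrix ι ι R) {P : Matrix ι ι R}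
    (B : Matrix κ κ R) {y : ι × κ → R} (hy : (P ⊗ₖ (1 : Matrix κ κ R)) *ᵥ y = 0) :
    ((A - P) ⊗ₖ B) *ᵥ y = (A ⊗ₖ B) *ᵥ y := by
  conv_rhs => rw [← sub_add_cancel A P, add_kronecker, add_mulVec, kronecker_mulVec_eq_zero B hy,
    add_zero]

end Kronecker

lemma isIdempotentElem_vecMulVec {R ι : Type*} [CommSemiring R] [Fintype ι] {u v : ι → R}
    (h : v ⬝ᵥ u = 1) : IsIdempotentElem (vecMulVec u v) := by
  rw [IsIdempotentElem, vecMulVec_mul_vecMulVec, h, one_smul]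

lemma IsInterconnection.mulVec_one {p : ℕ} {Γ : Matrix (Fin p) (Fin p) ℝ}
    (hΓ : IsInterconnection Γ) : Γ *ᵥ (fun _ => 1) = 0 := by
  funext i
  simp only [mulVec, dotProduct, mul_one, Pi.zero_apply]
  rw [← Finset.add_sum_erase _ _ (Finset.mem_univ i), hΓ.2 i, Finset.filter_ne',
    neg_add_cancel]

theorem stmt1_general {ι κ : Type*} [Fintype ι] [Fintype κ] [DecidableEq κ]
    {Γ P Ω C : Matrix ι ι ℝ} (hP : IsIdempotentElem P) (hPΓ : P * Γ = 0) (hΓP : Γ * P = 0)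
    (hlyap : (Γ - P)ᵀ * Ω + Ω * (Γ - P) = -C)
    {Q : ℝ → Matrix κ κ ℝ} {x : ℝ → ι × κ → ℝ}
    (hx : ∀ t, 0 ≤ t → HasDerivAt x ((Γ ⊗ₖ Q t) *ᵥ x t) t)
    {xbar : ι × κ → ℝ} (hxbar : xbar = (P ⊗ₖ (1 : Matrix κ κ ℝ)) *ᵥ x 0)
    {t : ℝ} (ht : 0 ≤ t) (hQ : (Q t).IsSymm) :
    HasDerivAt (fun s => (x s - xbar) ⬝ᵥ (Ω ⊗ₖ (1 : Matrix κ κ ℝ)) *ᵥ (x s - xbar))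
      (-((x t - xbar) ⬝ᵥ (C ⊗ₖ Q t) *ᵥ (x t - xbar))) t := by
  have hidem : IsIdempotentElem (P ⊗ₖ (1 : Matrix κ κ ℝ)) := by
    rw [IsIdempotentElem, ← mul_kronecker_mul, hP.eq, one_mul]
  have hker : (P ⊗ₖ (1 : Matrix κ κ ℝ)) *ᵥ (x t - xbar) = 0 :=
    hxbar ▸ mulVec_sub_mulVec_initial_eq_zero hidem hx
      (fun s _ => by rw [← mul_kronecker_mul, hPΓ, zero_kronecker]) ht
  have hequil : (Γ ⊗ₖ Q t) *ᵥ xbar = 0 := by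
    rw [hxbar, mulVec_mulVec, ← mul_kronecker_mul, hΓP, zero_kronecker, zero_mulVec]
  have hdev : HasDerivAt (fun s => x s - xbar) (((Γ - P) ⊗ₖ Q t) *ᵥ (x t - xbar)) t := by
    rw [sub_kronecker_mulVec_of_eq_zero Γ (Q t) hker]
    exact hasDerivAt_sub_of_mulVec_eq_zero (hx t ht) hequil
  simpa only [transpose_kronecker_mul_add_mul_kronecker _ _ hQ, hlyap, neg_kronecker, neg_mulVec,
    dotProduct_neg] using hasDerivAt_dotProduct_mulVec_self (Ω ⊗ₖ (1 : Matrix κ κ ℝ)) _ hdev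

theorem stmt1 {p n : ℕ} (Γ : Matrix (Fin p) (Fin p) ℝ)
    (hΓ : IsInterconnection Γ) (hconn : ConnectedMat Γ)
    (r : Fin p → ℝ) (hr1 : Matrix.vecMul r Γ = 0) (hr2 : ∑ i, r i = 1)
    (Ω : Matrix (Fin p) (Fin p) ℝ) (hΩs : Ω.IsSymm) (hΩpd : Ω.PosDef)
    (hlyap : (Γ - vecMulVec (fun _ => (1 : ℝ)) r)ᵀ * Ω
        + Ω * (Γ - vecMulVec (fun _ => (1 : ℝ)) r) = -1)
    (V : ((Fin p × Fin n) → ℝ) → ℝ)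
    (hV : ∀ z, V z = z ⬝ᵥ ((Ω ⊗ₖ (1 : Matrix (Fin n) (Fin n) ℝ)).mulVec z))
    (Q : ℝ → Matrix (Fin n) (Fin n) ℝ)
    (hQ : ∀ t : ℝ, 0 ≤ t → (Q t).PosSemidef)
    (hQint : ∀ a b : Fin n, ∀ s u : ℝ, IntervalIntegrable (fun t => Q t a b) volume s u)
    (x : ℝ → (Fin p × Fin n) → ℝ)
    (hx : ∀ t : ℝ, 0 ≤ t → ∀ i, HasDerivAt (fun s => x s i) (((Γ ⊗ₖ Q t).mulVec (x t)) i) t)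
    (xbar : (Fin p × Fin n) → ℝ)
    (hxbar : xbar = ((vecMulVec (fun _ => (1 : ℝ)) r) ⊗ₖ (1 : Matrix (Fin n) (Fin n) ℝ)).mulVec (x 0)) :
    ∀ t : ℝ, 0 ≤ t →
      HasDerivAt (fun s => V (x s - xbar))
        (-((x t - xbar) ⬝ᵥ (((1 : Matrix (Fin p) (Fin p) ℝ) ⊗ₖ Q t).mulVec (x t - xbar)))) t := by
  intro t ht
  simpa only [hV] using stmt1_general
    (isIdempotentElem_vecMulVec (by simpa only [dotProduct, mul_one] using hr2))
    (by rw [vecMulVec_mul, hr1, vecMulVec_zero])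
    (by rw [mul_vecMulVec, hΓ.mulVec_one, zero_vecMulVec])
    hlyap (fun s hs => hasDerivAt_pi.2 (hx s hs)) hxbar ht
    (isHermitian_iff_isSymm.1 (hQ t ht).isHermitian)
end
end

section
/- Given any interconnection Γ ∈ ℝ^{p×p} (not necessarily connected), there exists α > 0 such that for every function Q : ℝ≥0 → Q_n (Riemann-integrable) and every solution x : ℝ≥0 → ℝ^{np} of ẋ(t) = (Γ ⊗ Q_t) x(t), one has |x(t)| ≤ α |x(0)| for all t ≥ 0. -/
open Matrix MeasureTheory Filter
open scoped Kronecker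

noncomputable section

/-!
If `Γᵀ P + P Γ ≤ 0` for some positive definite `P`, then tensoring with `Q_t ≥ 0` shows that
`x ↦ xᵀ (P ⊗ 1) x` is nonincreasing along `ẋ = (Γ ⊗ Q_t) x`, whatever `Q` is; `α` is then a
condition number, depending on `P` alone.

To find `P`, take an Euler step `T = 1 + h Γ`: diagonal dominance makes it nonexpansive in the
maximum norm. For the averaged step `E = (1 + T) / 2`, cancellation between neighbouring binomial
coefficients gives `E ^ k (E - 1) = O(k ^ (-1/2))`. Write `A = E - 1`, let `X` be a generalized
inverse of `A` (`A X A = A`) and put `R = 1 - A X`, so that `R E = R`. The form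
`P = Rᵀ R + ∑ k < m, (E ^ k A)ᵀ (E ^ k A)` telescopes under `E`:
`Eᵀ P E - P = (E ^ m A)ᵀ (E ^ m A) - Aᵀ A`. As `E ^ m A = (E ^ m A X) A` with `E ^ m A X → 0`, this
is `≤ 0` for large `m`, and expanding `E = 1 + (h / 2) Γ` leaves `Γᵀ P + P Γ ≤ 0`.
-/

open scoped Topology MatrixOrder

section AsymptoticRegularity

lemma sum_choose_mul_sq_sub (n : ℕ) :
    ∑ j ∈ Finset.range (n + 1), (n.choose j : ℝ) * (2 * j - n) ^ 2 = (n : ℝ) * 2 ^ n := by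
  have hvar := congrArg (Polynomial.eval (1 / 2 : ℝ)) (bernsteinPolynomial.variance ℝ n)
  have hterm : ∀ j ∈ Finset.range (n + 1), (n.choose j : ℝ) * (2 * j - n) ^ 2
      = 4 * 2 ^ n * Polynomial.eval (1 / 2 : ℝ)
        ((n • Polynomial.X - (j : Polynomial ℝ)) ^ 2 * bernsteinPolynomial ℝ n j) := by
    intro j hj
    have hpow : (2 : ℝ) ^ n * ((1 / 2) ^ j * (1 / 2) ^ (n - j)) = 1 := by
      rw [← pow_add, Nat.add_sub_cancel' (Finset.mem_range_succ_iff.1 hj), ← mul_pow]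
      norm_num
    simp only [bernsteinPolynomial, Polynomial.eval_mul, Polynomial.eval_pow, Polynomial.eval_sub,
      Polynomial.eval_X, Polynomial.eval_natCast, Polynomial.eval_one, nsmul_eq_mul]
    linear_combination (-(n.choose j : ℝ) * (2 * j - n) ^ 2) * hpow
  rw [Finset.sum_congr rfl hterm, ← Finset.mul_sum, ← Polynomial.eval_finsetSum, hvar]
  simp only [Polynomial.eval_mul, Polynomial.eval_sub, Polynomial.eval_natCast,
    Polynomial.eval_X, Polynomial.eval_one, nsmul_eq_mul]
  ring

lemma sum_choose_mul_abs_sub_le (n : ℕ) :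
    ∑ j ∈ Finset.range (n + 1), (n.choose j : ℝ) * |2 * (j : ℝ) - n| ≤ √n * 2 ^ n := by
  have hsum : ∑ j ∈ Finset.range (n + 1), (n.choose j : ℝ) = 2 ^ n := by
    exact_mod_cast Nat.sum_range_choose n
  have hcs := Finset.sum_sq_le_sum_mul_sum_of_sq_le_mul (Finset.range (n + 1))
    (r := fun j => (n.choose j : ℝ) * |2 * (j : ℝ) - n|)
    (f := fun j => (n.choose j : ℝ)) (g := fun j => (n.choose j : ℝ) * (2 * j - n) ^ 2)
    (fun j _ => by positivity) (fun j _ => by positivity)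
    (fun j _ => by rw [mul_pow, sq_abs, sq, mul_assoc])
  rw [hsum, sum_choose_mul_sq_sub] at hcs
  refine le_of_sq_le_sq (hcs.trans_eq ?_) (by positivity)
  rw [mul_pow, Real.sq_sqrt n.cast_nonneg]
  ring

lemma sum_mul_choose_smul_pow {R A : Type*} [CommSemiring R] [Semiring A] [Algebra R A] (T : A)
    (k : ℕ) :
    ∑ j ∈ Finset.range (k + 2), ((j * (k + 1).choose j : ℕ) : R) • T ^ j
      = ((k + 1 : ℕ) : R) • ((1 + T) ^ k * T) := by
  rw [Finset.sum_range_succ', add_comm 1 T, (Commute.one_right T).add_pow, Finset.sum_mul,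
    Finset.smul_sum, zero_mul, Nat.cast_zero, zero_smul, add_zero]
  refine Finset.sum_congr rfl fun j _ => ?_
  rw [one_pow, mul_one, mul_comm (j + 1), ← Nat.add_one_mul_choose_eq, ← Nat.cast_comm, mul_assoc,
    ← pow_succ, ← nsmul_eq_mul, Nat.cast_mul, mul_smul, Nat.cast_smul_eq_nsmul R (k.choose j)]

lemma succ_smul_one_add_pow_mul_sub_one {R A : Type*} [CommRing R] [Ring A] [Algebra R A] (T : A)
    (k : ℕ) :
    ((k + 1 : ℕ) : R) • ((1 + T) ^ k * (T - 1))
      = ∑ j ∈ Finset.range (k + 2),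
          (((k + 1).choose j : R) * (2 * j - ((k + 1 : ℕ) : R))) • T ^ j := by
  have hbinom : (1 + T) ^ (k + 1) = ∑ j ∈ Finset.range (k + 2), ((k + 1).choose j : R) • T ^ j := by
    rw [add_comm 1 T, (Commute.one_right T).add_pow]
    simp only [one_pow, mul_one, Nat.cast_smul_eq_nsmul, nsmul_eq_mul, Nat.cast_comm]
  have hsplit : (1 + T) ^ k * (T - 1) = (2 : R) • ((1 + T) ^ k * T) - (1 + T) ^ (k + 1) := by
    rw [pow_succ, mul_sub, mul_add, two_smul]
    abel
  rw [hsplit, smul_sub, smul_comm, ← sum_mul_choose_smul_pow, hbinom, Finset.smul_sum,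
    Finset.smul_sum, ← Finset.sum_sub_distrib]
  refine Finset.sum_congr rfl fun j _ => ?_
  push_cast
  module

variable {A : Type*} [NormedRing A] [NormedAlgebra ℝ A] {T : A} {C : ℝ}

lemma norm_one_add_pow_mul_sub_one_le (hT : ∀ j, ‖T ^ j‖ ≤ C) (k : ℕ) :
    ‖(1 + T) ^ k * (T - 1)‖ ≤ C * (2 ^ (k + 1) / √(k + 1 : ℕ)) := by
  have hC : 0 ≤ C := (norm_nonneg _).trans (hT 0)
  have hk : (0 : ℝ) < (k + 1 : ℕ) := by positivity
  have hsum : (k + 1 : ℕ) * ‖(1 + T) ^ k * (T - 1)‖ ≤ C * (√(k + 1 : ℕ) * 2 ^ (k + 1)) := calc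
    _ = ‖((k + 1 : ℕ) : ℝ) • ((1 + T) ^ k * (T - 1))‖ := by
      rw [norm_smul, Real.norm_of_nonneg hk.le]
    _ ≤ ∑ j ∈ Finset.range (k + 2), (k + 1).choose j * |2 * (j : ℝ) - (k + 1 : ℕ)| * C := by
      rw [succ_smul_one_add_pow_mul_sub_one]
      refine norm_sum_le_of_le _ fun j _ => ?_
      rw [norm_smul, norm_mul, Real.norm_natCast, Real.norm_eq_abs]
      gcongr
      exact hT j
    _ ≤ C * (√(k + 1 : ℕ) * 2 ^ (k + 1)) := by
      rw [← Finset.sum_mul, mul_comm]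
      gcongr
      exact sum_choose_mul_abs_sub_le (k + 1)
  calc ‖(1 + T) ^ k * (T - 1)‖ ≤ C * (√(k + 1 : ℕ) * 2 ^ (k + 1)) / (k + 1 : ℕ) :=
        (le_div_iff₀' hk).2 hsum
    _ = C * (2 ^ (k + 1) / √(k + 1 : ℕ)) := by
      nth_rw 2 [← Real.mul_self_sqrt hk.le]
      field_simp

lemma tendsto_half_one_add_pow_mul_sub_one (hT : ∀ j, ‖T ^ j‖ ≤ C) :
    Tendsto (fun k : ℕ => ((1 / 2 : ℝ) • (1 + T)) ^ k * ((1 / 2 : ℝ) • (1 + T) - 1))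
      atTop (𝓝 0) := by
  have hsub : (1 / 2 : ℝ) • (1 + T) - 1 = (1 / 2 : ℝ) • (T - 1) := by module
  have hbound (k : ℕ) : ‖((1 / 2 : ℝ) • (1 + T)) ^ k * ((1 / 2 : ℝ) • (1 + T) - 1)‖
      ≤ C * (1 / √(k + 1 : ℕ)) := by
    rw [hsub, smul_pow, smul_mul_smul_comm, ← pow_succ, norm_smul,
      Real.norm_of_nonneg (by positivity), _root_.one_div_pow, one_div_mul_eq_div,
      div_le_iff₀ (by positivity)]
    exact (norm_one_add_pow_mul_sub_one_le hT k).trans_eq (by ring)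
  refine squeeze_zero_norm hbound ?_
  simpa using (tendsto_one_div_atTop_nhds_zero_nat (𝕜 := ℝ) |>.sqrt.comp
    (tendsto_add_atTop_nat 1)).const_mul C

end AsymptoticRegularity

section EuclideanNorm

open scoped Matrix.Norms.L2Operator

variable {m n : Type*} [Fintype m] [Fintype n]

lemma eunorm_sq (v : m → ℝ) : eunorm v ^ 2 = v ⬝ᵥ v := by
  rw [eunorm, Real.sq_sqrt (Finset.sum_nonneg fun i _ => sq_nonneg _)]
  simp only [dotProduct, sq]

lemma dotProduct_transpose_mul_self_mulVec (B : Matrix m n ℝ) (v : n → ℝ) :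
    v ⬝ᵥ (Bᵀ * B) *ᵥ v = eunorm (B *ᵥ v) ^ 2 := by
  rw [← mulVec_mulVec, dotProduct_mulVec, vecMul_transpose, eunorm_sq]

lemma eunorm_eq_norm_toLp (v : m → ℝ) : eunorm v = ‖WithLp.toLp 2 v‖ := by
  simp only [eunorm, EuclideanSpace.norm_eq, Real.norm_eq_abs, sq_abs]

lemma eunorm_mulVec_le [DecidableEq n] (B : Matrix m n ℝ) (v : n → ℝ) :
    eunorm (B *ᵥ v) ≤ ‖B‖ * eunorm v := by
  rw [eunorm_eq_norm_toLp, eunorm_eq_norm_toLp]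
  exact B.l2_opNorm_mulVec (WithLp.toLp 2 v)

lemma eventually_transpose_mul_self_le_one {k : Type*} [Finite k] [DecidableEq k] :
    ∀ᶠ W : Matrix m k ℝ in 𝓝 0, Wᵀ * W ≤ 1 := by
  cases nonempty_fintype k
  have hnorm : ∀ᶠ W : Matrix m k ℝ in 𝓝 0, ‖W‖ < 1 :=
    (continuous_norm.tendsto' 0 0 norm_zero).eventually_lt_const one_pos
  filter_upwards [hnorm] with W hW
  refine le_iff.2 (.of_dotProduct_mulVec_nonneg ?_ fun v => ?_)
  · exact isHermitian_one.sub (isHermitian_conjTranspose_mul_self W)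
  · have hWv : eunorm (W *ᵥ v) ≤ eunorm v :=
      (eunorm_mulVec_le W v).trans (mul_le_of_le_one_left (Real.sqrt_nonneg _) hW.le)
    rw [star_trivial, sub_mulVec, dotProduct_sub, dotProduct_transpose_mul_self_mulVec, one_mulVec,
      ← eunorm_sq, sub_nonneg]
    exact pow_le_pow_left₀ (Real.sqrt_nonneg _) hWv 2

lemma exists_eunorm_le_of_posDef {P : Matrix n n ℝ} (hP : P.PosDef) :
    ∃ α : ℝ, 0 < α ∧ ∀ v w : n → ℝ, v ⬝ᵥ P *ᵥ v ≤ w ⬝ᵥ P *ᵥ w → eunorm v ≤ α * eunorm w := by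
  classical
  obtain ⟨B, hB, rfl⟩ := CStarAlgebra.isStrictlyPositive_iff_eq_star_mul_self.1
    hP.isStrictlyPositive
  have hinv : B⁻¹ * B = 1 := nonsing_inv_mul B ((isUnit_iff_isUnit_det B).1 hB)
  refine ⟨‖B⁻¹‖ * ‖B‖ + 1, by positivity, fun v w hvw => ?_⟩
  rw [star_eq_conjTranspose, conjTranspose_eq_transpose_of_trivial,
    dotProduct_transpose_mul_self_mulVec, dotProduct_transpose_mul_self_mulVec] at hvw
  have hvw' : eunorm (B *ᵥ v) ≤ eunorm (B *ᵥ w) := le_of_sq_le_sq hvw (Real.sqrt_nonneg _)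
  calc eunorm v = eunorm (B⁻¹ *ᵥ (B *ᵥ v)) := by rw [mulVec_mulVec, hinv, one_mulVec]
    _ ≤ ‖B⁻¹‖ * eunorm (B *ᵥ v) := eunorm_mulVec_le _ _
    _ ≤ ‖B⁻¹‖ * (‖B‖ * eunorm w) := by
      gcongr
      exact hvw'.trans (eunorm_mulVec_le _ _)
    _ ≤ (‖B⁻¹‖ * ‖B‖ + 1) * eunorm w := by
      rw [← mul_assoc]
      gcongr
      · exact Real.sqrt_nonneg _
      · exact le_add_of_nonneg_right zero_le_one

end EuclideanNorm

section GeneralizedInverse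

variable {m n : Type*} [Fintype m] [Fintype n]

lemma exists_mul_mul_self_eq_self {K : Type*} [Field K] (A : Matrix m n K) :
    ∃ X : Matrix n m K, A * X * A = A := by
  classical
  obtain ⟨s, hs⟩ := A.toLin'.rangeRestrict.exists_rightInverse_of_surjective
    A.toLin'.range_rangeRestrict
  obtain ⟨g, hg⟩ := LinearMap.exists_extend s
  refine ⟨g.toMatrix', toLin'.injective (LinearMap.ext fun v => ?_)⟩
  have hgA : g (A.toLin' v) = s (A.toLin'.rangeRestrict v) :=
    LinearMap.congr_fun hg (A.toLin'.rangeRestrict v)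
  have hAs : A.toLin' (s (A.toLin'.rangeRestrict v)) = A.toLin' v :=
    congrArg Subtype.val (LinearMap.congr_fun hs _)
  rw [toLin'_mul, toLin'_mul, toLin'_toMatrix', LinearMap.comp_apply, LinearMap.comp_apply, hgA,
    hAs]

lemma posDef_transpose_mul_self_add {k : Type*} [Fintype k] {R : Matrix k n ℝ} {A : Matrix m n ℝ}
    (hRA : ∀ v, R *ᵥ v = 0 → A *ᵥ v = 0 → v = 0) : (Rᵀ * R + Aᵀ * A).PosDef := by
  rw [← fromCols_mul_fromRows, ← transpose_fromRows]
  refine .conjTranspose_mul_self _ ?_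
  refine (injective_iff_map_eq_zero (fromRows R A).mulVecLin).2 fun v hv => ?_
  rw [mulVecLin_apply, fromRows_mulVec] at hv
  exact hRA v (funext fun i => congrFun hv (.inl i)) (funext fun i => congrFun hv (.inr i))

end GeneralizedInverse

section OrbitGram

variable {ι : Type*} [Fintype ι] [DecidableEq ι] {E R : Matrix ι ι ℝ}

/-- The matrix of the quadratic form `v ↦ |R v|² + ∑ k < m, |E ^ k (E - 1) v|²`. When `R` is
`E`-invariant, substituting `E v` for `v` shifts the sum, so this candidate Lyapunov form changes
only by the two end terms. -/
def orbitGram (E R : Matrix ι ι ℝ) (m : ℕ) : Matrix ι ι ℝ :=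
  Rᵀ * R + ∑ k ∈ Finset.range m, (E ^ k * (E - 1))ᵀ * (E ^ k * (E - 1))

lemma orbitGram_conj (hR : R * E = R) (m : ℕ) :
    Eᵀ * orbitGram E R m * E
      = orbitGram E R m + (E ^ m * (E - 1))ᵀ * (E ^ m * (E - 1)) - (E - 1)ᵀ * (E - 1) := by
  have hRR : Eᵀ * (Rᵀ * R) * E = Rᵀ * R := by
    rw [mul_assoc, mul_assoc, hR, ← mul_assoc, ← transpose_mul, hR]
  have hshift (k : ℕ) : Eᵀ * ((E ^ k * (E - 1))ᵀ * (E ^ k * (E - 1))) * E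
      = (E ^ (k + 1) * (E - 1))ᵀ * (E ^ (k + 1) * (E - 1)) := by
    have hcomm : E ^ (k + 1) * (E - 1) = E ^ k * (E - 1) * E := by
      rw [pow_succ, mul_assoc, mul_assoc, mul_sub, sub_mul, mul_one, one_mul]
    rw [hcomm, transpose_mul (E ^ k * (E - 1)) E]
    simp only [mul_assoc]
  have htelescope := (Finset.sum_range_succ
    (fun k => (E ^ k * (E - 1))ᵀ * (E ^ k * (E - 1))) m).symm.trans (Finset.sum_range_succ' _ m)
  rw [pow_zero, one_mul] at htelescope
  rw [orbitGram, mul_add, add_mul, hRR, Finset.mul_sum, Finset.sum_mul,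
    Finset.sum_congr rfl fun k _ => hshift k, add_assoc, htelescope, ← add_assoc,
    add_sub_cancel_right]

lemma orbitGram_posDef (hR : ∀ v, R *ᵥ v = 0 → (E - 1) *ᵥ v = 0 → v = 0) {m : ℕ} (hm : 0 < m) :
    (orbitGram E R m).PosDef := by
  obtain ⟨k, rfl⟩ := Nat.exists_eq_add_one.2 hm
  rw [orbitGram, Finset.sum_range_succ', add_comm (∑ _ ∈ _, _), ← add_assoc, pow_zero, one_mul]
  exact (posDef_transpose_mul_self_add hR).add_posSemidef
    (posSemidef_sum _ fun _ _ => posSemidef_conjTranspose_mul_self _)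

variable (hE : Tendsto (fun k => E ^ k * (E - 1)) atTop (𝓝 0))
include hE

lemma sub_one_mulVec_eq_zero_of_tendsto {v : ι → ℝ} (hv : (E - 1) *ᵥ ((E - 1) *ᵥ v) = 0) :
    (E - 1) *ᵥ v = 0 := by
  have hfix (k : ℕ) : (E ^ k * (E - 1)) *ᵥ v = (E - 1) *ᵥ v := by
    induction k with
    | zero => rw [pow_zero, one_mul]
    | succ k ih =>
      rw [sub_mulVec, one_mulVec, sub_eq_zero] at hv
      rw [pow_succ', mul_assoc, ← mulVec_mulVec, ih, hv]
  have hlim : Tendsto (fun k => (E ^ k * (E - 1)) *ᵥ v) atTop (𝓝 (0 *ᵥ v)) :=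
    ((continuous_id.matrix_mulVec continuous_const).tendsto 0).comp hE
  simp only [hfix, zero_mulVec] at hlim
  exact tendsto_nhds_unique tendsto_const_nhds hlim

lemma exists_posDef_conj_le_of_tendsto : ∃ P : Matrix ι ι ℝ, P.PosDef ∧ Eᵀ * P * E ≤ P := by
  obtain ⟨X, hX⟩ := exists_mul_mul_self_eq_self (E - 1)
  set R := 1 - (E - 1) * X with hRdef
  have hRE : R * E = R := by
    have hRA : R * (E - 1) = 0 := by rw [hRdef, sub_mul, one_mul, hX, sub_self]
    rwa [mul_sub, mul_one, sub_eq_zero] at hRA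
  have hker (v : ι → ℝ) (hRv : R *ᵥ v = 0) (hAv : (E - 1) *ᵥ v = 0) : v = 0 := by
    rw [hRdef, sub_mulVec, one_mulVec, sub_eq_zero, ← mulVec_mulVec] at hRv
    rw [hRv] at hAv ⊢
    exact sub_one_mulVec_eq_zero_of_tendsto hE hAv
  have hlim : Tendsto (fun k => E ^ k * (E - 1) * X) atTop (𝓝 0) := by
    simpa only [zero_mul] using hE.mul_const X
  obtain ⟨m, hm, hm0⟩ :=
    ((hlim.eventually eventually_transpose_mul_self_le_one).and (eventually_gt_atTop 0)).exists
  refine ⟨orbitGram E R m, orbitGram_posDef hker hm0, ?_⟩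
  have hend : (E ^ m * (E - 1))ᵀ * (E ^ m * (E - 1)) ≤ (E - 1)ᵀ * (E - 1) := calc
    _ = (E - 1)ᵀ * ((E ^ m * (E - 1) * X)ᵀ * (E ^ m * (E - 1) * X)) * (E - 1) := by
      nth_rw 1 2 [← hX]
      simp only [transpose_mul, mul_assoc]
    _ ≤ (E - 1)ᵀ * 1 * (E - 1) := star_left_conjugate_le_conjugate hm (E - 1)
    _ = (E - 1)ᵀ * (E - 1) := by rw [mul_one]
  rw [orbitGram_conj hRE, add_sub_assoc]
  exact add_le_of_nonpos_right (sub_nonpos.2 hend)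

end OrbitGram

section Dissipative

variable {ι κ : Type*} [Fintype ι] [Fintype κ]

/-- The Lyapunov inequality `Aᵀ P + P A ≤ 0` in the Loewner order: the quadratic form of `P` does
not increase along the solutions of `ẋ = A x`. -/
def IsDissipative (A P : Matrix ι ι ℝ) : Prop :=
  Aᵀ * P + P * A ≤ 0

lemma isDissipative_sub_one_of_conj_le [DecidableEq ι] {E P : Matrix ι ι ℝ} (hP : P.PosSemidef)
    (hE : Eᵀ * P * E ≤ P) : IsDissipative (E - 1) P := by
  have hexpand : (E - 1)ᵀ * P + P * (E - 1) = (Eᵀ * P * E - P) - (E - 1)ᵀ * P * (E - 1) := by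
    rw [transpose_sub, transpose_one]
    noncomm_ring
  have hgram : 0 ≤ (E - 1)ᵀ * P * (E - 1) := by
    simpa only [conjTranspose_eq_transpose_of_trivial] using
      (hP.conjTranspose_mul_mul_same (E - 1)).nonneg
  rw [IsDissipative, hexpand]
  exact sub_nonpos.2 ((sub_nonpos.2 hE).trans hgram)

namespace IsDissipative

variable {A P : Matrix ι ι ℝ}

lemma of_smul {c : ℝ} (hc : 0 < c) (h : IsDissipative (c • A) P) : IsDissipative A P := by
  have hscale : Aᵀ * P + P * A = c⁻¹ • ((c • A)ᵀ * P + P * (c • A)) := by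
    rw [transpose_smul, Matrix.smul_mul, Matrix.mul_smul, ← smul_add, inv_smul_smul₀ hc.ne']
  rw [IsDissipative, hscale]
  exact smul_nonpos_of_nonneg_of_nonpos (inv_nonneg.2 hc.le) h

lemma kronecker [DecidableEq κ] (h : IsDissipative A P) {Q : Matrix κ κ ℝ} (hQ : Q.PosSemidef) :
    IsDissipative (A ⊗ₖ Q) (P ⊗ₖ 1) := by
  have hsymm : Qᵀ = Q := hQ.isHermitian
  have hfactor : (A ⊗ₖ Q)ᵀ * (P ⊗ₖ 1) + (P ⊗ₖ 1) * (A ⊗ₖ Q) = (Aᵀ * P + P * A) ⊗ₖ Q := by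
    rw [← kroneckerMap_transpose, ← mul_kronecker_mul, ← mul_kronecker_mul, hsymm,
      one_mul, mul_one, add_kronecker]
  have hneg : -((Aᵀ * P + P * A) ⊗ₖ Q) = (-(Aᵀ * P + P * A)) ⊗ₖ Q := by
    rw [← neg_one_smul ℝ, ← smul_kronecker, neg_one_smul]
  rw [IsDissipative, hfactor, ← neg_nonneg, hneg, nonneg_iff_posSemidef]
  exact (nonneg_iff_posSemidef.1 (neg_nonneg.2 h)).kronecker hQ

end IsDissipative

lemma hasDerivAt_dotProduct_mulVec {x : ℝ → ι → ℝ} {x' : ι → ℝ} {t : ℝ} (P : Matrix ι ι ℝ)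
    (hx : ∀ i, HasDerivAt (fun s => x s i) (x' i) t) :
    HasDerivAt (fun s => x s ⬝ᵥ P *ᵥ x s) (x' ⬝ᵥ P *ᵥ x t + x t ⬝ᵥ P *ᵥ x') t := by
  simp only [dotProduct, mulVec, ← Finset.sum_add_distrib]
  exact .fun_sum fun i _ => (hx i).mul (.fun_sum fun j _ => (hx j).const_mul (P i j))

lemma antitoneOn_dotProduct_mulVec {A : ℝ → Matrix ι ι ℝ} {P : Matrix ι ι ℝ} {x : ℝ → ι → ℝ}
    (hA : ∀ t, 0 ≤ t → IsDissipative (A t) P)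
    (hx : ∀ t, 0 ≤ t → ∀ i, HasDerivAt (fun s => x s i) ((A t *ᵥ x t) i) t) :
    AntitoneOn (fun t => x t ⬝ᵥ P *ᵥ x t) (Set.Ici 0) := by
  have hderiv (t : ℝ) (ht : 0 ≤ t) := hasDerivAt_dotProduct_mulVec P (hx t ht)
  refine antitoneOn_of_hasDerivWithinAt_nonpos (convex_Ici 0)
    (fun t ht => (hderiv t ht).continuousAt.continuousWithinAt)
    (fun t ht => (hderiv t (interior_subset ht)).hasDerivWithinAt) fun t ht => ?_
  have hform : (A t *ᵥ x t) ⬝ᵥ P *ᵥ x t + x t ⬝ᵥ P *ᵥ (A t *ᵥ x t)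
      = x t ⬝ᵥ ((A t)ᵀ * P + P * A t) *ᵥ x t := by
    rw [add_mulVec, dotProduct_add, ← mulVec_mulVec, ← mulVec_mulVec,
      dotProduct_mulVec (x t) (A t)ᵀ, vecMul_transpose]
  have hneg := (nonneg_iff_posSemidef.1 (neg_nonneg.2 (hA t (interior_subset ht)))
    ).dotProduct_mulVec_nonneg (x t)
  rw [star_trivial, neg_mulVec, dotProduct_neg, ← hform] at hneg
  exact neg_nonneg.1 hneg

end Dissipative

section DiagonallyDominant

variable {ι : Type*} [Fintype ι] [DecidableEq ι] {Γ : Matrix ι ι ℝ}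

open scoped Matrix.Norms.Operator in
lemma norm_one_add_smul_le_one {h : ℝ} (hh : 0 ≤ h)
    (hΓ : ∀ i, ∑ j ∈ Finset.univ.erase i, |Γ i j| ≤ -Γ i i) (hdiag : ∀ i, h * -Γ i i ≤ 1) :
    ‖1 + h • Γ‖ ≤ 1 := by
  suffices hrow : ∀ i, ∑ j, ‖(1 + h • Γ) i j‖ ≤ 1 by
    rw [linfty_opNorm_def, ← NNReal.coe_one, NNReal.coe_le_coe, Finset.sup_le_iff]
    intro i _
    rw [← NNReal.coe_le_coe, NNReal.coe_sum]
    exact hrow i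
  intro i
  have hoff : ∑ j ∈ Finset.univ.erase i, ‖(1 + h • Γ) i j‖
      = h * ∑ j ∈ Finset.univ.erase i, |Γ i j| := by
    rw [Finset.mul_sum]
    refine Finset.sum_congr rfl fun j hj => ?_
    rw [Matrix.add_apply, one_apply_ne (Finset.ne_of_mem_erase hj).symm, zero_add,
      Matrix.smul_apply, norm_smul, Real.norm_of_nonneg hh, Real.norm_eq_abs]
  rw [← Finset.add_sum_erase _ _ (Finset.mem_univ i), hoff, Matrix.add_apply, one_apply_eq,
    Matrix.smul_apply, smul_eq_mul, Real.norm_of_nonneg (by linarith [hdiag i])]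
  linarith [mul_le_mul_of_nonneg_left (hΓ i) hh]

open scoped Matrix.Norms.Operator in
lemma exists_posDef_isDissipative (hΓ : ∀ i, ∑ j ∈ Finset.univ.erase i, |Γ i j| ≤ -Γ i i) :
    ∃ P : Matrix ι ι ℝ, P.PosDef ∧ IsDissipative Γ P := by
  have hdiag (i : ι) : 0 ≤ -Γ i i := (Finset.sum_nonneg fun _ _ => abs_nonneg _).trans (hΓ i)
  obtain ⟨h, hh, hstep⟩ : ∃ h : ℝ, 0 < h ∧ ∀ i, h * -Γ i i ≤ 1 := by
    have hsum : 0 ≤ ∑ j, -Γ j j := Finset.sum_nonneg fun j _ => hdiag j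
    refine ⟨(1 + ∑ j, -Γ j j)⁻¹, by positivity, fun i => ?_⟩
    have hle := Finset.single_le_sum (fun j _ => hdiag j) (Finset.mem_univ i)
    rw [inv_mul_le_iff₀ (by positivity)]
    linarith
  have hpow (k : ℕ) : ‖(1 + h • Γ) ^ k‖ ≤ 1 := by
    cases isEmpty_or_nonempty ι
    · rw [Subsingleton.elim ((1 + h • Γ) ^ k) 0, norm_zero]
      exact zero_le_one
    · exact (norm_pow_le _ k).trans
        (pow_le_one₀ (norm_nonneg _) (norm_one_add_smul_le_one hh.le hΓ hstep))
  obtain ⟨P, hP, hconj⟩ :=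
    exists_posDef_conj_le_of_tendsto (tendsto_half_one_add_pow_mul_sub_one hpow)
  have heuler : (1 / 2 : ℝ) • (1 + (1 + h • Γ)) - 1 = (h / 2) • Γ := by module
  have hdiss := isDissipative_sub_one_of_conj_le hP.posSemidef hconj
  rw [heuler] at hdiss
  exact ⟨P, hP, hdiss.of_smul (half_pos hh)⟩

end DiagonallyDominant

lemma IsInterconnection.sum_abs_erase {p : ℕ} {Γ : Matrix (Fin p) (Fin p) ℝ}
    (hΓ : IsInterconnection Γ) (i : Fin p) : ∑ j ∈ Finset.univ.erase i, |Γ i j| = -Γ i i := by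
  rw [hΓ.2 i, neg_neg, Finset.filter_ne']
  exact Finset.sum_congr rfl fun j hj => abs_of_nonneg (hΓ.1 i j (Finset.ne_of_mem_erase hj).symm)

theorem stmt2_general {ι κ : Type*} [Fintype ι] [DecidableEq ι] [Fintype κ] {Γ : Matrix ι ι ℝ}
    (hΓ : ∀ i, ∑ j ∈ Finset.univ.erase i, |Γ i j| ≤ -Γ i i) :
    ∃ α : ℝ, 0 < α ∧
      ∀ Q : ℝ → Matrix κ κ ℝ,
        (∀ t : ℝ, 0 ≤ t → (Q t).PosSemidef) →
        ∀ x : ℝ → (ι × κ) → ℝ,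
          (∀ t : ℝ, 0 ≤ t → ∀ i, HasDerivAt (fun s => x s i) (((Γ ⊗ₖ Q t).mulVec (x t)) i) t) →
          ∀ t : ℝ, 0 ≤ t → eunorm (x t) ≤ α * eunorm (x 0) := by
  classical
  obtain ⟨P, hP, hdiss⟩ := exists_posDef_isDissipative hΓ
  have hPone : (P ⊗ₖ (1 : Matrix κ κ ℝ)).PosDef := hP.kronecker .one
  obtain ⟨α, hα, hbound⟩ := exists_eunorm_le_of_posDef hPone
  refine ⟨α, hα, fun Q hQ x hx t ht => hbound _ _ ?_⟩
  exact antitoneOn_dotProduct_mulVec (fun s hs => hdiss.kronecker (hQ s hs)) hx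
    Set.self_mem_Ici ht ht

theorem stmt2 {p n : ℕ} (Γ : Matrix (Fin p) (Fin p) ℝ)
    (hΓ : IsInterconnection Γ) :
    ∃ α : ℝ, 0 < α ∧
      ∀ Q : ℝ → Matrix (Fin n) (Fin n) ℝ,
        (∀ t : ℝ, 0 ≤ t → (Q t).PosSemidef) →
        (∀ a b : Fin n, ∀ s u : ℝ, IntervalIntegrable (fun t => Q t a b) volume s u) →
        ∀ x : ℝ → (Fin p × Fin n) → ℝ,
          (∀ t : ℝ, 0 ≤ t → ∀ i, HasDerivAt (fun s => x s i) (((Γ ⊗ₖ Q t).mulVec (x t)) i) t) →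
          ∀ t : ℝ, 0 ≤ t → eunorm (x t) ≤ α * eunorm (x 0) := by
  obtain ⟨α, hα, hbound⟩ := stmt2_general (κ := Fin n) fun i => (hΓ.sum_abs_erase i).le
  exact ⟨α, hα, fun Q hQ _ => hbound Q hQ⟩
end
end

section
/- Let Q : ℝ≥0 → Q̄_n be sufficiently exciting. Then for every connected interconnection Γ = [γ_ij] ∈ ℝ^{p×p}, the solutions x_i : ℝ≥0 → ℝ^n of the array ẋ_i(t) = Q_t Σ_{j≠i} γ_ij (x_j(t) − x_i(t)), i = 1,…,p, synchronize to the constant trajectory x̄(t) ≡ (r^T ⊗ I_n) x(0), where x(0) ∈ ℝ^{np} stacks x_1(0),…,x_p(0) and r ∈ ℝ^p satisfies r^T Γ = 0 and r^T 1 = 1; that is, |x_i(t) − x̄(t)| → 0 as t → ∞ for each i. -/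
open Matrix MeasureTheory Filter
open scoped Kronecker

noncomputable section

/-!
Some power of the stochastic matrix `1 + h Γ` has a positive column, so it contracts the hyperplane
`r ⬝ᵥ w = 0`; summing the squared norms of the iterates yields a symmetric `P` such that `P ≥ 1`
and `-P Γ ≥ 1` there as quadratic forms. Let `z` be the deviation of the array from the constant
`∑ⱼ rⱼ xⱼ(0)`, put `V = zᵀ (P ⊗ 1) z`, and let `D` be the integral of `∑ᵢ ⟪zᵢ, Q zᵢ⟫` over a window
of length `T`.

* `V' = 2 zᵀ (P Γ ⊗ Q) z ≤ -2 ∑ᵢ ⟪zᵢ, Q zᵢ⟫`, so `V` loses at least `2 D` over the window.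
* Since `‖Q w‖² ≤ ⟪w, Q w⟫`, the squared displacement of `z` within the window is `O(T D)`. Freezing
  `z` at its initial value therefore costs `O(T² D)`, and excitation of level `ε` gives
  `ε ∑ᵢ ‖zᵢ‖² = O((1 + T²) D)`.

Hence each window multiplies `V` by at most `1 - κ ε / (1 + T²)`, and since `∑ ε / (1 + T²)`
diverges, `V → 0`.
-/

section StochasticMatrices

variable {ι : Type*} [Fintype ι] [DecidableEq ι] {A B : Matrix ι ι ℝ} {v : ι}

theorem exists_forall_pow_apply_pos (hA : ∀ i j, 0 ≤ A i j) (hv : 0 < A v v)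
    (hreach : ∀ u, Relation.ReflTransGen (fun i j => 0 < A i j) u v) :
    ∃ m : ℕ, ∀ u, 0 < (A ^ m) u v := by
  have exists_pos : ∀ u, ∃ m : ℕ, 0 < (A ^ m) u v := by
    intro u
    induction hreach u using Relation.ReflTransGen.head_induction_on with
    | refl => exact ⟨0, by simp⟩
    | @head a c hac _ ih =>
      obtain ⟨m, hm⟩ := ih
      refine ⟨m + 1, ?_⟩
      rw [pow_succ', mul_apply]
      exact Finset.sum_pos' (fun k _ => mul_nonneg (hA a k) (pow_apply_nonneg hA m k v))
        ⟨c, Finset.mem_univ _, mul_pos hac hm⟩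
  choose m hm using exists_pos
  have pos_of_le : ∀ u l, m u ≤ l → 0 < (A ^ l) u v := by
    intro u l hl
    induction l, hl using Nat.le_induction with
    | base => exact hm u
    | succ l _ ih =>
      rw [pow_succ, mul_apply]
      exact Finset.sum_pos' (fun k _ => mul_nonneg (pow_apply_nonneg hA l u k) (hA k v))
        ⟨v, Finset.mem_univ _, mul_pos ih hv⟩
  exact ⟨∑ u, m u, fun u => pos_of_le u _ (Finset.single_le_sum_of_canonicallyOrdered
    (Finset.mem_univ u))⟩

theorem mulVec_le_of_le_column (hB : B ∈ rowStochastic ℝ ι) {α : ℝ} {i : ι} (hα : α ≤ B i v)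
    {w : ι → ℝ} {b : ℝ} (hb : ∀ k, w k ≤ b) : (B *ᵥ w) i ≤ b - α * (b - w v) := by
  have hsum : b - (B *ᵥ w) i = ∑ l, B i l * (b - w l) := by
    simp [mulVec, dotProduct, mul_sub, ← Finset.sum_mul, sum_row_of_mem_rowStochastic hB]
  have hterm : B i v * (b - w v) ≤ ∑ l, B i l * (b - w l) :=
    Finset.single_le_sum (f := fun l => B i l * (b - w l))
      (fun l _ => mul_nonneg (hB.1 i l) (sub_nonneg.2 (hb l))) (Finset.mem_univ v)
  linarith [mul_le_mul_of_nonneg_right hα (sub_nonneg.2 (hb v))]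

theorem mulVec_sub_le_of_le_column (hB : B ∈ rowStochastic ℝ ι) {α : ℝ} (hα : ∀ i, α ≤ B i v)
    {w : ι → ℝ} {s : ℝ} (hw : ∀ i j, w i - w j ≤ s) (i j : ι) :
    (B *ᵥ w) i - (B *ᵥ w) j ≤ (1 - α) * s := by
  have : Nonempty ι := ⟨v⟩
  obtain ⟨k, hk⟩ := Finite.exists_max w
  obtain ⟨l, hl⟩ := Finite.exists_min w
  have hi := mulVec_le_of_le_column hB (hα i) hk
  have hj := mulVec_le_of_le_column hB (hα j) (w := -w) fun a => neg_le_neg (hl a)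
  have hα1 : 0 ≤ 1 - α := sub_nonneg.2 ((hα v).trans (le_one_of_mem_rowStochastic hB))
  rw [mulVec_neg, Pi.neg_apply, Pi.neg_apply] at hj
  linarith [mul_le_mul_of_nonneg_left (hw k l) hα1]

theorem pow_mulVec_sub_le_of_le_column (hB : B ∈ rowStochastic ℝ ι) {α : ℝ}
    (hα : ∀ i, α ≤ B i v) {w : ι → ℝ} {s : ℝ} (hw : ∀ i j, w i - w j ≤ s) (k : ℕ) (i j : ι) :
    (B ^ k *ᵥ w) i - (B ^ k *ᵥ w) j ≤ (1 - α) ^ k * s := by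
  induction k generalizing i j with
  | zero => simpa using hw i j
  | succ k ih =>
    rw [pow_succ', ← mulVec_mulVec, pow_succ', mul_assoc]
    exact mulVec_sub_le_of_le_column hB hα ih i j

end StochasticMatrices

theorem norm_le_of_dotProduct_eq_zero {ι : Type*} [Fintype ι] {r y : ι → ℝ} {s : ℝ} (hs : 0 ≤ s)
    (hr : ∑ i, r i = 1) (hy : r ⬝ᵥ y = 0) (hosc : ∀ i j, y i - y j ≤ s) :
    ‖y‖ ≤ (∑ j, |r j|) * s := by
  refine (pi_norm_le_iff_of_nonneg (by positivity)).2 fun i => ?_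
  have hyi : y i = ∑ j, r j * (y i - y j) := by
    have : ∑ j, r j * y j = 0 := hy
    simp [mul_sub, ← Finset.sum_mul, hr, this]
  rw [hyi, Finset.sum_mul]
  refine (norm_sum_le _ _).trans (Finset.sum_le_sum fun j _ => ?_)
  rw [norm_mul, Real.norm_eq_abs, Real.norm_eq_abs]
  gcongr
  exact abs_sub_le_iff.2 ⟨hosc i j, hosc j i⟩

theorem exists_pow_mulVec_norm_le {ι : Type*} [Fintype ι] [DecidableEq ι] {A : Matrix ι ι ℝ} {v : ι}
    (hA : A ∈ rowStochastic ℝ ι) (hv : 0 < A v v)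
    (hreach : ∀ u, Relation.ReflTransGen (fun i j => 0 < A i j) u v)
    {r : ι → ℝ} (hr : r ᵥ* A = r) (hr1 : ∑ i, r i = 1) {δ : ℝ} (hδ : 0 < δ) :
    ∃ N : ℕ, ∀ w : ι → ℝ, r ⬝ᵥ w = 0 → ‖A ^ N *ᵥ w‖ ≤ δ * ‖w‖ := by
  obtain ⟨m, hm⟩ := exists_forall_pow_apply_pos hA.1 hv hreach
  have : Nonempty ι := ⟨v⟩
  obtain ⟨u, hu⟩ := Finite.exists_min fun i => (A ^ m) i v
  set α := (A ^ m) u v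
  have hB : A ^ m ∈ rowStochastic ℝ ι := pow_mem hA m
  have hα1 : 0 ≤ 1 - α := sub_nonneg.2 (le_one_of_mem_rowStochastic hB)
  have hlim : Tendsto (fun k : ℕ => (∑ j, |r j|) * ((1 - α) ^ k * 2)) atTop (nhds 0) := by
    simpa using ((tendsto_pow_atTop_nhds_zero_of_lt_one hα1
      (sub_lt_self 1 (hm u))).mul_const 2).const_mul (∑ j, |r j|)
  obtain ⟨k, hk⟩ := (hlim.eventually_le_const hδ).exists
  have hfix : ∀ l : ℕ, r ᵥ* A ^ l = r := by
    intro l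
    induction l with
    | zero => simp
    | succ l ih => rw [pow_succ, ← vecMul_vecMul, ih, hr]
  refine ⟨m * k, fun w hw => ?_⟩
  have hosc : ∀ i j, w i - w j ≤ 2 * ‖w‖ := fun i j => by
    linarith [(abs_le.1 (norm_le_pi_norm w i)).2, (abs_le.1 (norm_le_pi_norm w j)).1]
  calc ‖A ^ (m * k) *ᵥ w‖ ≤ (∑ j, |r j|) * ((1 - α) ^ k * (2 * ‖w‖)) := by
        refine norm_le_of_dotProduct_eq_zero (by positivity) hr1 ?_ ?_
        · rw [dotProduct_mulVec, hfix, hw]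
        · rw [pow_mul]
          exact pow_mulVec_sub_le_of_le_column hB hu hosc k
    _ = (∑ j, |r j|) * ((1 - α) ^ k * 2) * ‖w‖ := by ring
    _ ≤ δ * ‖w‖ := by gcongr

theorem dotProduct_self_le_card_mul_norm_sq {ι : Type*} [Fintype ι] (w : ι → ℝ) :
    w ⬝ᵥ w ≤ Fintype.card ι * ‖w‖ ^ 2 := by
  calc w ⬝ᵥ w ≤ ∑ _i : ι, ‖w‖ ^ 2 := Finset.sum_le_sum fun i _ => by
        rw [← sq, ← sq_abs]
        exact pow_le_pow_left₀ (abs_nonneg _) (norm_le_pi_norm w i) 2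
    _ = Fintype.card ι * ‖w‖ ^ 2 := by simp

theorem norm_sq_le_dotProduct_self {ι : Type*} [Fintype ι] (w : ι → ℝ) : ‖w‖ ^ 2 ≤ w ⬝ᵥ w := by
  have hnonneg : ∀ i, 0 ≤ w i * w i := fun i => mul_self_nonneg (w i)
  refine (Real.le_sqrt (norm_nonneg w) (Finset.sum_nonneg fun i _ => hnonneg i)).1 ?_
  refine (pi_norm_le_iff_of_nonneg (Real.sqrt_nonneg _)).2 fun i => Real.abs_le_sqrt ?_
  rw [sq]
  exact Finset.single_le_sum (fun j _ => hnonneg j) (Finset.mem_univ i)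

theorem exists_pow_mulVec_dotProduct_self_le {ι : Type*} [Fintype ι] [DecidableEq ι]
    {A : Matrix ι ι ℝ} {v : ι} (hA : A ∈ rowStochastic ℝ ι) (hv : 0 < A v v)
    (hreach : ∀ u, Relation.ReflTransGen (fun i j => 0 < A i j) u v)
    {r : ι → ℝ} (hr : r ᵥ* A = r) (hr1 : ∑ i, r i = 1) :
    ∃ N : ℕ, ∀ w : ι → ℝ, r ⬝ᵥ w = 0 →
      (A ^ N *ᵥ w) ⬝ᵥ (A ^ N *ᵥ w) ≤ 1 / 2 * (w ⬝ᵥ w) := by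
  set c : ℝ := (Fintype.card ι : ℝ)
  have hc : c * (1 / (c + 1)) ^ 2 ≤ 1 / 2 := by
    rw [one_div, inv_pow, ← div_eq_mul_inv, div_le_div_iff₀ (by positivity) two_pos]
    nlinarith [sq_nonneg c]
  obtain ⟨N, hN⟩ := exists_pow_mulVec_norm_le hA hv hreach hr hr1
    (δ := 1 / (c + 1)) (by positivity)
  refine ⟨N, fun w hw => ?_⟩
  calc (A ^ N *ᵥ w) ⬝ᵥ (A ^ N *ᵥ w) ≤ c * ‖A ^ N *ᵥ w‖ ^ 2 :=
        dotProduct_self_le_card_mul_norm_sq _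
    _ ≤ c * (1 / (c + 1) * ‖w‖) ^ 2 := by gcongr; exact hN w hw
    _ = c * (1 / (c + 1)) ^ 2 * ‖w‖ ^ 2 := by ring
    _ ≤ 1 / 2 * (w ⬝ᵥ w) := by gcongr; exact norm_sq_le_dotProduct_self w

section LyapunovMatrix

variable {ι : Type*} [Fintype ι]

/-- `P` is a Lyapunov matrix for the linear flow `ẇ = Γ w` on the hyperplane `r ⬝ᵥ w = 0`: there
both the quadratic form of `P` and its rate of decrease dominate the squared Euclidean norm. The
two constants of domination are normalized to `1`. -/
structure IsLyapunovMatrix (P Γ : Matrix ι ι ℝ) (r : ι → ℝ) : Prop where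
  isSymm : P.IsSymm
  coercive : ∀ w, r ⬝ᵥ w = 0 → w ⬝ᵥ w ≤ w ⬝ᵥ P *ᵥ w
  decay : ∀ w, r ⬝ᵥ w = 0 → w ⬝ᵥ w ≤ -(w ⬝ᵥ (P * Γ) *ᵥ w)

theorem dotProduct_transpose_mul_mul_mulVec {R : Type*} [CommSemiring R] (A S : Matrix ι ι R)
    (w : ι → R) : w ⬝ᵥ (Aᵀ * S * A) *ᵥ w = (A *ᵥ w) ⬝ᵥ S *ᵥ (A *ᵥ w) := by
  rw [← mulVec_mulVec, ← mulVec_mulVec, dotProduct_mulVec, vecMul_transpose]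

variable [DecidableEq ι]

/-- The observability Gramian over the horizon `N` of the iteration `w ↦ A w` with full
observation; its quadratic form is `∑ k < N, |A ^ k w|²`. -/
def obsGramian (A : Matrix ι ι ℝ) (N : ℕ) : Matrix ι ι ℝ :=
  ∑ k ∈ Finset.range N, (A ^ k)ᵀ * A ^ k

theorem posSemidef_obsGramian (A : Matrix ι ι ℝ) (N : ℕ) : (obsGramian A N).PosSemidef :=
  posSemidef_sum _ fun k _ => by
    simpa using posSemidef_conjTranspose_mul_self (A ^ k)

theorem transpose_mul_obsGramian_mul (A : Matrix ι ι ℝ) (N : ℕ) :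
    Aᵀ * obsGramian A N * A = obsGramian A N + (A ^ N)ᵀ * A ^ N - 1 := by
  have hshift : Aᵀ * obsGramian A N * A =
      ∑ k ∈ Finset.range N, (A ^ (k + 1))ᵀ * A ^ (k + 1) := by
    simp only [obsGramian, Finset.mul_sum, Finset.sum_mul, pow_succ, transpose_mul, mul_assoc]
  have hsucc := Finset.sum_range_succ' (fun k => (A ^ k)ᵀ * A ^ k) N
  rw [Finset.sum_range_succ] at hsucc
  simp only [pow_zero, transpose_one, mul_one] at hsucc
  rw [hshift, obsGramian, hsucc, add_sub_cancel_right]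

theorem dotProduct_mulVec_obsGramian (A : Matrix ι ι ℝ) (N : ℕ) (w : ι → ℝ) :
    (A *ᵥ w) ⬝ᵥ obsGramian A N *ᵥ (A *ᵥ w) =
      w ⬝ᵥ obsGramian A N *ᵥ w + (A ^ N *ᵥ w) ⬝ᵥ (A ^ N *ᵥ w) - w ⬝ᵥ w := by
  have hpow : w ⬝ᵥ ((A ^ N)ᵀ * A ^ N) *ᵥ w = (A ^ N *ᵥ w) ⬝ᵥ (A ^ N *ᵥ w) := by
    simpa using dotProduct_transpose_mul_mul_mulVec (A ^ N) 1 w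
  rw [← dotProduct_transpose_mul_mul_mulVec, transpose_mul_obsGramian_mul, sub_mulVec,
    add_mulVec, dotProduct_sub, dotProduct_add, hpow, one_mulVec]

theorem dotProduct_mulVec_one_add_smul {G : Matrix ι ι ℝ} (hG : G.IsSymm) (Γ : Matrix ι ι ℝ)
    (h : ℝ) (w : ι → ℝ) :
    ((1 + h • Γ) *ᵥ w) ⬝ᵥ G *ᵥ ((1 + h • Γ) *ᵥ w) =
      w ⬝ᵥ G *ᵥ w + 2 * h * (w ⬝ᵥ (G * Γ) *ᵥ w) + h ^ 2 * ((Γ *ᵥ w) ⬝ᵥ G *ᵥ (Γ *ᵥ w)) := by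
  have hsymm : (Γ *ᵥ w) ⬝ᵥ G *ᵥ w = w ⬝ᵥ G *ᵥ (Γ *ᵥ w) := by
    rw [dotProduct_mulVec, ← mulVec_transpose, hG, dotProduct_comm]
  simp only [← mulVec_mulVec, add_mulVec, one_mulVec, smul_mulVec, mulVec_add, mulVec_smul,
    add_dotProduct, dotProduct_add, smul_dotProduct, dotProduct_smul, smul_eq_mul, hsymm]
  ring

theorem isLyapunovMatrix_smul_obsGramian {Γ : Matrix ι ι ℝ} {h : ℝ} (hh : 0 < h) {r : ι → ℝ}
    {N : ℕ} (hN : ∀ w : ι → ℝ, r ⬝ᵥ w = 0 →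
      ((1 + h • Γ) ^ N *ᵥ w) ⬝ᵥ ((1 + h • Γ) ^ N *ᵥ w) ≤ 1 / 2 * (w ⬝ᵥ w)) :
    IsLyapunovMatrix ((2 + 4 * h) • obsGramian (1 + h • Γ) N) Γ r := by
  set A := 1 + h • Γ
  set G := obsGramian A N
  have hG : G.PosSemidef := posSemidef_obsGramian A N
  have hGsymm : G.IsSymm := by simpa [IsSymm, IsHermitian] using hG.isHermitian
  have form_nonneg : ∀ w, 0 ≤ w ⬝ᵥ G *ᵥ w := fun w => by
    simpa using hG.dotProduct_mulVec_nonneg w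
  have norm_nonneg : ∀ w : ι → ℝ, 0 ≤ w ⬝ᵥ w := fun w =>
    Finset.sum_nonneg fun i _ => mul_self_nonneg (w i)
  refine ⟨hGsymm.smul _, fun w hw => ?_, fun w hw => ?_⟩
  · have hhalf : 1 / 2 * (w ⬝ᵥ w) ≤ w ⬝ᵥ G *ᵥ w := by
      linarith [dotProduct_mulVec_obsGramian A N w, form_nonneg (A *ᵥ w), hN w hw]
    rw [smul_mulVec, dotProduct_smul, smul_eq_mul]
    nlinarith [form_nonneg w]
  · have hdecay : 1 / 2 * (w ⬝ᵥ w) ≤ 2 * h * -(w ⬝ᵥ (G * Γ) *ᵥ w) := by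
      linarith [dotProduct_mulVec_obsGramian A N w, dotProduct_mulVec_one_add_smul hGsymm Γ h w,
        mul_nonneg (sq_nonneg h) (form_nonneg (Γ *ᵥ w)), hN w hw]
    have hrate : 0 ≤ -(w ⬝ᵥ (G * Γ) *ᵥ w) :=
      nonneg_of_mul_nonneg_right ((mul_nonneg one_half_pos.le (norm_nonneg w)).trans hdecay)
        (by positivity)
    rw [smul_mul, smul_mulVec, dotProduct_smul, smul_eq_mul]
    linarith

end LyapunovMatrix

section Interconnection

variable {p : ℕ} {Γ : Matrix (Fin p) (Fin p) ℝ}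

theorem IsInterconnection.sum_eq_zero (hΓ : IsInterconnection Γ) (i : Fin p) :
    ∑ j, Γ i j = 0 := by
  rw [← Finset.add_sum_erase _ _ (Finset.mem_univ i), hΓ.2 i, ← Finset.filter_ne',
    neg_add_cancel]

theorem IsInterconnection.one_add_smul_mem_rowStochastic (hΓ : IsInterconnection Γ) {h : ℝ}
    (hh : 0 ≤ h) (hdiag : ∀ i, 0 ≤ (1 + h • Γ) i i) :
    1 + h • Γ ∈ rowStochastic ℝ (Fin p) := by
  refine mem_rowStochastic_iff_sum.2 ⟨fun i j => ?_, fun i => ?_⟩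
  · rcases eq_or_ne i j with rfl | hij
    · exact hdiag i
    · simpa [one_apply_ne hij] using mul_nonneg hh (hΓ.1 i j hij)
  · simp [Finset.sum_add_distrib, ← Finset.mul_sum, hΓ.sum_eq_zero, one_apply]

theorem exists_forall_one_add_smul_apply_self_pos {ι : Type*} [Finite ι] [DecidableEq ι]
    (M : Matrix ι ι ℝ) : ∃ h : ℝ, 0 < h ∧ ∀ i, 0 < (1 + h • M) i i := by
  have hlim : ∀ i, Tendsto (fun h : ℝ => (1 + h • M) i i) (nhdsWithin 0 (Set.Ioi 0)) (nhds 1) := by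
    intro i
    have : ContinuousAt (fun h : ℝ => (1 + h • M) i i) 0 := by
      simp only [Matrix.add_apply, Matrix.smul_apply, smul_eq_mul]
      fun_prop
    simpa using this.tendsto.mono_left nhdsWithin_le_nhds
  have hev := eventually_all.2 fun i => (hlim i).eventually_const_lt one_pos
  obtain ⟨h, hdiag, hh⟩ := (hev.and self_mem_nhdsWithin).exists
  exact ⟨h, hh, hdiag⟩

theorem IsInterconnection.exists_isLyapunovMatrix (hΓ : IsInterconnection Γ)
    (hconn : ConnectedMat Γ) {r : Fin p → ℝ} (hr : r ᵥ* Γ = 0) (hr1 : ∑ i, r i = 1) :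
    ∃ P, IsLyapunovMatrix P Γ r := by
  obtain ⟨v, hv⟩ := hconn
  obtain ⟨h, hh, hdiag⟩ := exists_forall_one_add_smul_apply_self_pos Γ
  have hA := hΓ.one_add_smul_mem_rowStochastic hh.le fun i => (hdiag i).le
  have hfix : r ᵥ* (1 + h • Γ) = r := by
    rw [vecMul_add, vecMul_smul, hr, vecMul_one, smul_zero, add_zero]
  have hreach : ∀ u, Relation.ReflTransGen (fun i j => 0 < (1 + h • Γ) i j) u v := by
    refine fun u => Relation.ReflTransGen.mono (fun i j hij => ?_) u v (hv u)
    rcases eq_or_ne i j with rfl | hne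
    · exact hdiag i
    · simpa [one_apply_ne hne] using mul_pos hh hij
  obtain ⟨N, hN⟩ := exists_pow_mulVec_dotProduct_self_le hA (hdiag v) hreach hfix hr1
  exact ⟨_, isLyapunovMatrix_smul_obsGramian hh hN⟩

end Interconnection

theorem exists_dotProduct_mulVec_le {ι : Type*} [Fintype ι] (P : Matrix ι ι ℝ) :
    ∃ C > 0, ∀ w : ι → ℝ, w ⬝ᵥ P *ᵥ w ≤ C * (w ⬝ᵥ w) := by
  refine ⟨1 + ∑ i, ∑ j, |P i j|, by positivity, fun w => ?_⟩
  have hw : 0 ≤ w ⬝ᵥ w := Finset.sum_nonneg fun i _ => mul_self_nonneg (w i)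
  have hcoord : ∀ i, w i ^ 2 ≤ w ⬝ᵥ w := fun i => by
    rw [sq]
    exact Finset.single_le_sum (f := fun i => w i * w i) (fun j _ => mul_self_nonneg _)
      (Finset.mem_univ i)
  have hterm : ∀ i j, w i * (P i j * w j) ≤ |P i j| * (w ⬝ᵥ w) := by
    intro i j
    have hprod : |w i * w j| ≤ w ⬝ᵥ w := by
      rw [abs_le]
      constructor <;> nlinarith [sq_nonneg (w i + w j), sq_nonneg (w i - w j), hcoord i, hcoord j]
    calc w i * (P i j * w j) ≤ |P i j * (w i * w j)| := by
          rw [mul_left_comm]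
          exact le_abs_self _
      _ ≤ |P i j| * (w ⬝ᵥ w) := by
          rw [abs_mul]
          gcongr
  calc w ⬝ᵥ P *ᵥ w = ∑ i, ∑ j, w i * (P i j * w j) := by
        simp only [dotProduct, mulVec, Finset.mul_sum]
    _ ≤ ∑ i, ∑ j, |P i j| * (w ⬝ᵥ w) :=
        Finset.sum_le_sum fun i _ => Finset.sum_le_sum fun j _ => hterm i j
    _ ≤ (1 + ∑ i, ∑ j, |P i j|) * (w ⬝ᵥ w) := by
        simp only [← Finset.sum_mul]
        linarith

section KroneckerForm

variable {ι : Type*} [Fintype ι] {E : Type*} [NormedAddCommGroup E] [InnerProductSpace ℝ E]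

/-- The quadratic form `zᵀ (S ⊗ R) z` of a Kronecker product, on families `z` of vectors of an
inner product space indexed by the rows of `S`. -/
def kronForm (S : Matrix ι ι ℝ) (R : E →L[ℝ] E) (z : ι → E) : ℝ :=
  ∑ i, ∑ j, S i j * inner ℝ (z i) (R (z j))

theorem kronForm_one [DecidableEq ι] (R : E →L[ℝ] E) (z : ι → E) :
    kronForm 1 R z = ∑ i, inner ℝ (z i) (R (z i)) := by
  simp [kronForm, one_apply]

theorem kronForm_neg (S : Matrix ι ι ℝ) (R : E →L[ℝ] E) (z : ι → E) :
    kronForm (-S) R z = -kronForm S R z := by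
  simp [kronForm]

theorem kronForm_smul (c : ℝ) (S : Matrix ι ι ℝ) (R : E →L[ℝ] E) (z : ι → E) :
    kronForm (c • S) R z = c * kronForm S R z := by
  simp [kronForm, Finset.mul_sum, mul_assoc]

theorem posSemidef_of_inner {κ : Type*} [Finite κ] {R : E →L[ℝ] E} (hR : R.IsPositive)
    (z : κ → E) : (of fun i j => inner ℝ (z i) (R (z j))).PosSemidef := by
  have := Fintype.ofFinite κ
  refine .of_dotProduct_mulVec_nonneg ?_ fun w => ?_
  · ext i j
    simpa [real_inner_comm (z i)] using (hR.inner_left_eq_inner_right (z j) (z i)).symm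
  · have hform : w ⬝ᵥ (of fun i j => inner ℝ (z i) (R (z j))) *ᵥ w =
        inner ℝ (∑ i, w i • z i) (R (∑ j, w j • z j)) := by
      simp only [dotProduct, mulVec, of_apply, map_sum, map_smul, sum_inner, inner_sum,
        real_inner_smul_left, real_inner_smul_right, Finset.mul_sum]
      rw [Finset.sum_comm]
      exact Finset.sum_congr rfl fun j _ => Finset.sum_congr rfl fun i _ => by ring
    rw [star_trivial, hform]
    exact hR.inner_nonneg_right _

open scoped MatrixOrder in
/-- Factoring the positive semidefinite matrix of all `⟪z i, R (z j)⟫` as `Bᵀ * B` splits the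
form into the forms of `S` at the rows of `B`. -/
theorem exists_kronForm_eq_sum_dotProduct_mulVec {R : E →L[ℝ] E} (hR : R.IsPositive) {z : ι → E}
    {r : ι → ℝ} (hz : ∑ i, r i • z i = 0) : ∃ B : Matrix ι ι ℝ, B *ᵥ r = 0 ∧
      ∀ S : Matrix ι ι ℝ, kronForm S R z = ∑ k, B k ⬝ᵥ S *ᵥ B k := by
  classical
  obtain ⟨B, hB⟩ :=
    CStarAlgebra.nonneg_iff_eq_star_mul_self.1 (posSemidef_of_inner hR z).nonneg
  rw [star_eq_conjTranspose] at hB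
  refine ⟨B, ?_, fun S => ?_⟩
  · rw [← conjTranspose_mul_self_mulVec_eq_zero, ← hB]
    ext i
    have hi : inner ℝ (z i) (R (∑ j, r j • z j)) = 0 := by rw [hz, map_zero, inner_zero_right]
    simpa [mulVec, dotProduct, inner_sum, real_inner_smul_right, mul_comm] using hi
  · have hentry : ∀ i j, inner ℝ (z i) (R (z j)) = ∑ k, B k i * B k j := fun i j => by
      simpa [mul_apply] using congrFun₂ hB i j
    simp only [kronForm, hentry, dotProduct, mulVec, Finset.mul_sum]
    rw [Finset.sum_comm_cycle]
    exact Finset.sum_congr rfl fun k _ => Finset.sum_congr rfl fun i _ =>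
      Finset.sum_congr rfl fun j _ => by ring

theorem kronForm_mono {S S' : Matrix ι ι ℝ} {r : ι → ℝ}
    (hS : ∀ w, r ⬝ᵥ w = 0 → w ⬝ᵥ S *ᵥ w ≤ w ⬝ᵥ S' *ᵥ w) {R : E →L[ℝ] E} (hR : R.IsPositive)
    {z : ι → E} (hz : ∑ i, r i • z i = 0) : kronForm S R z ≤ kronForm S' R z := by
  obtain ⟨B, hBr, hB⟩ := exists_kronForm_eq_sum_dotProduct_mulVec hR hz
  rw [hB, hB]
  exact Finset.sum_le_sum fun k _ => hS _ ((dotProduct_comm _ _).trans (congrFun hBr k))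

end KroneckerForm

theorem mul_le_sq_div_add {c : ℝ} (hc : 0 < c) (a b : ℝ) :
    a * b ≤ a ^ 2 / (2 * c) + c / 2 * b ^ 2 := by
  have hsq : a ^ 2 / (2 * c) + c / 2 * b ^ 2 - a * b = (a - c * b) ^ 2 / (2 * c) := by
    field_simp
    ring
  have hnonneg : 0 ≤ (a - c * b) ^ 2 / (2 * c) := by positivity
  linarith

section ContractiveGain

variable {E : Type*} [NormedAddCommGroup E] [InnerProductSpace ℝ E] {R : E →L[ℝ] E}

theorem inner_map_self_le_norm_sq (hR : ‖R‖ ≤ 1) (v : E) : inner ℝ v (R v) ≤ ‖v‖ ^ 2 :=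
  calc inner ℝ v (R v) ≤ ‖v‖ * ‖R v‖ := real_inner_le_norm _ _
    _ ≤ ‖v‖ * ‖v‖ := by gcongr; exact R.le_of_opNorm_le_of_le hR le_rfl |>.trans_eq (one_mul _)
    _ = ‖v‖ ^ 2 := (sq _).symm

theorem norm_map_sq_le_inner (hR : R.IsPositive) (hR1 : ‖R‖ ≤ 1) (v : E) :
    ‖R v‖ ^ 2 ≤ inner ℝ v (R v) := by
  have hpos := hR.inner_nonneg_right (v - R v)
  have hsymm : inner ℝ v (R (R v)) = ‖R v‖ ^ 2 := by
    rw [← hR.inner_left_eq_inner_right, real_inner_self_eq_norm_sq]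
  rw [map_sub, inner_sub_left, inner_sub_right, inner_sub_right, hsymm,
    real_inner_self_eq_norm_sq] at hpos
  linarith [inner_map_self_le_norm_sq hR1 (R v)]

theorem inner_map_self_le_two_mul_add (hR : R.IsPositive) (hR1 : ‖R‖ ≤ 1) (u v : E) :
    inner ℝ u (R u) ≤ 2 * inner ℝ v (R v) + 2 * ‖v - u‖ ^ 2 := by
  have hpos := hR.inner_nonneg_right (v + (v - u))
  have parallelogram : inner ℝ (v + (v - u)) (R (v + (v - u))) + inner ℝ u (R u) =
      2 * inner ℝ v (R v) + 2 * inner ℝ (v - u) (R (v - u)) := by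
    simp only [map_add, map_sub, inner_add_left, inner_add_right, inner_sub_left,
      inner_sub_right]
    ring
  linarith [inner_map_self_le_norm_sq hR1 (v - u)]

/-- `Q` is a time-varying gain with values in the positive contractions: the analogue on an inner
product space of a locally integrable function `ℝ≥0 → Q̄_n`. -/
structure IsContractiveGain (Q : ℝ → E →L[ℝ] E) : Prop where
  isPositive : ∀ t, 0 ≤ t → (Q t).IsPositive
  norm_le_one : ∀ t, 0 ≤ t → ‖Q t‖ ≤ 1
  intervalIntegrable : ∀ s t, 0 ≤ s → 0 ≤ t → IntervalIntegrable Q volume s t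

theorem intervalIntegrable_inner_map {Q : ℝ → E →L[ℝ] E} {v w : ℝ → E} {s t : ℝ}
    (hQ : IntervalIntegrable Q volume s t) (hv : ContinuousOn v (Set.uIcc s t))
    (hw : ContinuousOn w (Set.uIcc s t)) :
    IntervalIntegrable (fun τ => inner ℝ (v τ) (Q τ (w τ))) volume s t := by
  have hmeas : ∀ {f : ℝ → E}, ContinuousOn f (Set.uIcc s t) →
      AEStronglyMeasurable f (volume.restrict (Set.uIoc s t)) := fun hf =>
    hf.aestronglyMeasurable_of_subset_isCompact
      isCompact_uIcc measurableSet_uIoc Set.uIoc_subset_uIcc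
  refine (hQ.norm.mul_continuousOn (hv.norm.mul hw.norm)).mono_fun' ?_ (.of_forall fun τ => ?_)
  · exact (hmeas hv).inner (isBoundedBilinearMap_apply.continuous.comp_aestronglyMeasurable
      (hQ.aestronglyMeasurable_restrict_uIoc.prodMk (hmeas hw)))
  · calc ‖inner ℝ (v τ) (Q τ (w τ))‖ ≤ ‖v τ‖ * ‖Q τ (w τ)‖ := norm_inner_le_norm _ _
      _ ≤ ‖v τ‖ * (‖Q τ‖ * ‖w τ‖) := by gcongr; exact (Q τ).le_opNorm _
      _ = ‖Q τ‖ * (‖v τ‖ * ‖w τ‖) := by ring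

theorem IsContractiveGain.integral_inner_le {Q : ℝ → E →L[ℝ] E} (hQ : IsContractiveGain Q)
    {s t : ℝ} (hs : 0 ≤ s) (hst : s ≤ t) (v : E) :
    ∫ τ in s..t, inner ℝ v (Q τ v) ≤ (t - s) * ‖v‖ ^ 2 :=
  calc ∫ τ in s..t, inner ℝ v (Q τ v) ≤ ∫ _ in s..t, ‖v‖ ^ 2 :=
        intervalIntegral.integral_mono_on hst (intervalIntegrable_inner_map
          (hQ.intervalIntegrable s t hs (hs.trans hst)) continuousOn_const continuousOn_const)
          intervalIntegrable_const
          fun τ hτ => inner_map_self_le_norm_sq (hQ.norm_le_one τ (hs.trans hτ.1)) v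
    _ = (t - s) * ‖v‖ ^ 2 := intervalIntegral.integral_const _

/-- Integrating the scalar function `⟪F t - F s, F τ⟫` instead of `f` avoids Bochner integrals in
the possibly incomplete space `E`. -/
theorem norm_sub_sq_le_mul_integral {F f : ℝ → E} {g : ℝ → ℝ} {s t : ℝ} (hst : s ≤ t)
    (hF : ∀ τ ∈ Set.Icc s t, HasDerivAt F (f τ) τ) (hg : IntervalIntegrable g volume s t)
    (hfg : ∀ τ ∈ Set.Icc s t, ‖f τ‖ ^ 2 ≤ g τ) :
    ‖F t - F s‖ ^ 2 ≤ (t - s) * ∫ τ in s..t, g τ := by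
  rcases hst.eq_or_lt with rfl | hlt
  · simp
  have hpos : 0 < t - s := sub_pos.2 hlt
  set Δ := F t - F s
  have hderiv : ∀ τ ∈ Set.Icc s t, HasDerivAt (fun τ => inner ℝ Δ (F τ)) (inner ℝ Δ (f τ)) τ :=
    fun τ hτ => by simpa using (hasDerivAt_const τ Δ).inner ℝ (hF τ hτ)
  have young : ∀ τ ∈ Set.Icc s t,
      inner ℝ Δ (f τ) ≤ ‖Δ‖ ^ 2 / (2 * (t - s)) + (t - s) / 2 * g τ := by
    intro τ hτ
    refine (real_inner_le_norm _ _).trans ?_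
    exact (mul_le_sq_div_add hpos _ _).trans (by gcongr; exact hfg τ hτ)
  have hint : IntervalIntegrable (fun τ => ‖Δ‖ ^ 2 / (2 * (t - s)) + (t - s) / 2 * g τ)
      volume s t := intervalIntegrable_const.add (hg.const_mul _)
  have hle := intervalIntegral.sub_le_integral_of_hasDeriv_right_of_le hst
    (fun τ hτ => (hderiv τ hτ).continuousAt.continuousWithinAt)
    (fun τ hτ => (hderiv τ (Set.Ioo_subset_Icc_self hτ)).hasDerivWithinAt)
    ((intervalIntegrable_iff_integrableOn_Icc_of_le hst).1 hint)
    (fun τ hτ => young τ (Set.Ioo_subset_Icc_self hτ))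
  rw [← inner_sub_right, real_inner_self_eq_norm_sq, intervalIntegral.integral_add
    intervalIntegrable_const (hg.const_mul _), intervalIntegral.integral_const,
    intervalIntegral.integral_const_mul, smul_eq_mul] at hle
  have hcancel : (t - s) * (‖Δ‖ ^ 2 / (2 * (t - s))) = ‖Δ‖ ^ 2 / 2 := by field_simp
  linarith

end ContractiveGain

theorem tendsto_zero_of_succ_le_one_sub_mul {u a : ℕ → ℝ} (hu : ∀ N, 0 ≤ u N)
    (hstep : ∀ N, u (N + 1) ≤ (1 - a N) * u N)
    (ha : Tendsto (fun N => ∑ i ∈ Finset.range N, a i) atTop atTop) :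
    Tendsto u atTop (nhds 0) := by
  have hle : ∀ N, u N ≤ Real.exp (-∑ i ∈ Finset.range N, a i) * u 0 := by
    intro N
    induction N with
    | zero => simp
    | succ N ih =>
      calc u (N + 1) ≤ (1 - a N) * u N := hstep N
        _ ≤ Real.exp (-a N) * u N :=
          mul_le_mul_of_nonneg_right (Real.one_sub_le_exp_neg _) (hu N)
        _ ≤ Real.exp (-a N) * (Real.exp (-∑ i ∈ Finset.range N, a i) * u 0) := by gcongr
        _ = Real.exp (-∑ i ∈ Finset.range (N + 1), a i) * u 0 := by
          rw [← mul_assoc, ← Real.exp_add, Finset.sum_range_succ, neg_add_rev]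
  refine squeeze_zero hu hle ?_
  simpa using (Real.tendsto_exp_neg_atTop_nhds_zero.comp ha).mul_const (u 0)

section Disagreement

variable {ι : Type*} [Fintype ι] {E : Type*} [NormedAddCommGroup E] [InnerProductSpace ℝ E]

theorem norm_sum_smul_sq_le (c : ι → ℝ) (v : ι → E) :
    ‖∑ k, c k • v k‖ ^ 2 ≤ (∑ k, c k ^ 2) * ∑ k, ‖v k‖ ^ 2 :=
  calc ‖∑ k, c k • v k‖ ^ 2 ≤ (∑ k, |c k| * ‖v k‖) ^ 2 := by
        gcongr
        exact (norm_sum_le _ _).trans_eq (by simp [norm_smul])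
    _ ≤ (∑ k, |c k| ^ 2) * ∑ k, ‖v k‖ ^ 2 := Finset.sum_mul_sq_le_sq_mul_sq _ _ _
    _ = (∑ k, c k ^ 2) * ∑ k, ‖v k‖ ^ 2 := by simp

theorem norm_map_sum_smul_sq_le [DecidableEq ι] {R : E →L[ℝ] E} (hR : R.IsPositive)
    (hR1 : ‖R‖ ≤ 1) (c : ι → ℝ) (v : ι → E) :
    ‖R (∑ k, c k • v k)‖ ^ 2 ≤ (∑ k, c k ^ 2) * kronForm 1 R v := by
  rw [map_sum, kronForm_one]
  simp only [map_smul]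
  refine (norm_sum_smul_sq_le c fun k => R (v k)).trans ?_
  gcongr with k
  exact norm_map_sq_le_inner hR hR1 (v k)

theorem kronForm_one_le_two_mul_add [DecidableEq ι] {R : E →L[ℝ] E} (hR : R.IsPositive)
    (hR1 : ‖R‖ ≤ 1) (u v : ι → E) :
    kronForm 1 R u ≤ 2 * kronForm 1 R v + 2 * ∑ i, ‖v i - u i‖ ^ 2 := by
  simp only [kronForm_one, Finset.mul_sum, ← Finset.sum_add_distrib]
  exact Finset.sum_le_sum fun i _ => inner_map_self_le_two_mul_add hR hR1 (u i) (v i)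

theorem kronForm_one_one [DecidableEq ι] (z : ι → E) : kronForm 1 1 z = ∑ i, ‖z i‖ ^ 2 := by
  simp [kronForm_one]

theorem kronForm_one_nonneg [DecidableEq ι] {R : E →L[ℝ] E} (hR : R.IsPositive) (z : ι → E) :
    0 ≤ kronForm 1 R z := by
  rw [kronForm_one]
  exact Finset.sum_nonneg fun i _ => hR.inner_nonneg_right (z i)

theorem kronForm_mul (S S' : Matrix ι ι ℝ) (R : E →L[ℝ] E) (z : ι → E) :
    kronForm (S * S') R z = ∑ i, ∑ j, S i j * inner ℝ (z i) (R (∑ k, S' j k • z k)) := by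
  simp only [kronForm, mul_apply, map_sum, map_smul, inner_sum, real_inner_smul_right,
    Finset.mul_sum, Finset.sum_mul]
  refine Finset.sum_congr rfl fun i _ => ?_
  rw [Finset.sum_comm]
  exact Finset.sum_congr rfl fun j _ => Finset.sum_congr rfl fun k _ => mul_assoc _ _ _

theorem hasDerivAt_kronForm_one {P : Matrix ι ι ℝ} (hP : P.IsSymm) {z : ι → ℝ → E} {z' : ι → E}
    {t : ℝ} (hz : ∀ i, HasDerivAt (z i) (z' i) t) :
    HasDerivAt (fun τ => kronForm P 1 fun i => z i τ)
      (2 * ∑ i, ∑ j, P i j * inner ℝ (z i t) (z' j)) t := by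
  have hderiv := HasDerivAt.fun_sum (u := Finset.univ) fun i _ =>
    HasDerivAt.fun_sum (u := Finset.univ) fun j _ =>
      ((hz i).inner ℝ (hz j)).const_mul (P i j)
  have hswap : ∑ i, ∑ j, P i j * inner ℝ (z' i) (z j t) =
      ∑ i, ∑ j, P i j * inner ℝ (z i t) (z' j) := by
    rw [Finset.sum_comm]
    simp only [hP.apply, real_inner_comm]
  simp only [mul_add, Finset.sum_add_distrib, hswap] at hderiv
  rw [two_mul]
  exact hderiv

theorem IsContractiveGain.integral_kronForm_one_nonneg [DecidableEq ι] {Q : ℝ → E →L[ℝ] E}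
    (hQ : IsContractiveGain Q) {s t : ℝ} (hs : 0 ≤ s) (hst : s ≤ t) (z : ι → ℝ → E) :
    0 ≤ ∫ τ in s..t, kronForm 1 (Q τ) fun i => z i τ :=
  intervalIntegral.integral_nonneg hst fun τ hτ =>
    kronForm_one_nonneg (hQ.isPositive τ (hs.trans hτ.1)) _

theorem IsContractiveGain.intervalIntegrable_kronForm_one [DecidableEq ι] {Q : ℝ → E →L[ℝ] E}
    (hQ : IsContractiveGain Q) {s t : ℝ} (hs : 0 ≤ s) (ht : 0 ≤ t) {z : ι → ℝ → E}
    (hz : ∀ i, ContinuousOn (z i) (Set.uIcc s t)) :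
    IntervalIntegrable (fun τ => kronForm 1 (Q τ) fun i => z i τ) volume s t := by
  simp only [kronForm_one]
  simpa only [Finset.sum_fn] using IntervalIntegrable.sum Finset.univ fun i _ =>
    intervalIntegrable_inner_map (hQ.intervalIntegrable s t hs ht) (hz i) (hz i)

/-- `z` is a disagreement trajectory of the array with gain `Q` and interconnection `Γ`: it solves
`żᵢ = Q_t ∑ₖ γᵢₖ zₖ` and its `r`-weighted average vanishes. Differences between the states of an
array and their limit are of this form. -/
structure IsDisagreement (Q : ℝ → E →L[ℝ] E) (Γ : Matrix ι ι ℝ) (r : ι → ℝ) (z : ι → ℝ → E) :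
    Prop where
  hasDerivAt : ∀ i t, 0 ≤ t → HasDerivAt (z i) (Q t (∑ k, Γ i k • z k t)) t
  sum_smul_eq_zero : ∀ t, 0 ≤ t → ∑ i, r i • z i t = 0

/-- Sufficient excitation of an operator-valued gain: on the consecutive windows
`[τᵢ, τᵢ + Tᵢ]`, `τᵢ = ∑_{j<i} Tⱼ`, the quadratic form of `∫ Q` is bounded below by `εᵢ`, and
`∑ᵢ εᵢ / (1 + Tᵢ ^ 2) = ∞`. This weight is at least the `δ(εᵢ, Tᵢ)` of `SuffExcitingCT` when
`εᵢ ≤ Tᵢ`, which a contractive gain on a nontrivial space enforces. -/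
def IsSufficientlyExciting (Q : ℝ → E →L[ℝ] E) : Prop :=
  ∃ ε T : ℕ → ℝ, (∀ i, 0 ≤ ε i) ∧ (∀ i, 0 ≤ T i) ∧
    (∀ i v, ε i * ‖v‖ ^ 2 ≤ ∫ t in (∑ j ∈ Finset.range i, T j)..(∑ j ∈ Finset.range i, T j) + T i,
      inner ℝ v (Q t v)) ∧
    Tendsto (fun N => ∑ i ∈ Finset.range N, ε i / (1 + T i ^ 2)) atTop atTop

namespace IsDisagreement

variable {Q : ℝ → E →L[ℝ] E} {Γ P : Matrix ι ι ℝ} {r : ι → ℝ} {z : ι → ℝ → E} {s t : ℝ}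

theorem continuousOn (hz : IsDisagreement Q Γ r z) (hs : 0 ≤ s) (ht : 0 ≤ t) (i : ι) :
    ContinuousOn (z i) (Set.uIcc s t) := fun τ hτ =>
  (hz.hasDerivAt i τ ((le_inf hs ht).trans hτ.1)).continuousAt.continuousWithinAt

section

variable [DecidableEq ι]

theorem intervalIntegrable_kronForm_one (hz : IsDisagreement Q Γ r z) (hQ : IsContractiveGain Q)
    (hs : 0 ≤ s) (ht : 0 ≤ t) :
    IntervalIntegrable (fun τ => kronForm 1 (Q τ) fun i => z i τ) volume s t :=
  hQ.intervalIntegrable_kronForm_one hs ht (hz.continuousOn hs ht)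

theorem kronForm_sub_le (hz : IsDisagreement Q Γ r z) (hQ : IsContractiveGain Q)
    (hP : IsLyapunovMatrix P Γ r) (hs : 0 ≤ s) (hst : s ≤ t) :
    (kronForm P 1 fun i => z i t) - (kronForm P 1 fun i => z i s) ≤
      -2 * ∫ τ in s..t, kronForm 1 (Q τ) fun i => z i τ := by
  have hderiv : ∀ τ, 0 ≤ τ → HasDerivAt (fun τ => kronForm P 1 fun i => z i τ)
      (2 * kronForm (P * Γ) (Q τ) fun i => z i τ) τ := fun τ hτ => by
    rw [kronForm_mul]
    exact hasDerivAt_kronForm_one hP.isSymm fun i => hz.hasDerivAt i τ hτ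
  have hdecay : ∀ τ, 0 ≤ τ → (2 * kronForm (P * Γ) (Q τ) fun i => z i τ) ≤
      -2 * kronForm 1 (Q τ) fun i => z i τ := by
    intro τ hτ
    have := kronForm_mono (S := 1) (S' := -(P * Γ))
      (fun w hw => by simpa [neg_mulVec] using hP.decay w hw)
      (hQ.isPositive τ hτ) (hz.sum_smul_eq_zero τ hτ)
    rw [kronForm_neg] at this
    linarith
  rw [← intervalIntegral.integral_const_mul]
  exact intervalIntegral.sub_le_integral_of_hasDeriv_right_of_le hst
    (fun τ hτ => (hderiv τ (hs.trans hτ.1)).continuousAt.continuousWithinAt)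
    (fun τ hτ => (hderiv τ (hs.trans hτ.1.le)).hasDerivWithinAt)
    ((intervalIntegrable_iff_integrableOn_Icc_of_le hst).1
      ((hz.intervalIntegrable_kronForm_one hQ hs (hs.trans hst)).const_mul _))
    (fun τ hτ => hdecay τ (hs.trans hτ.1.le))

theorem sum_norm_sub_sq_le (hz : IsDisagreement Q Γ r z) (hQ : IsContractiveGain Q)
    (hs : 0 ≤ s) (hst : s ≤ t) :
    ∑ i, ‖z i t - z i s‖ ^ 2 ≤ (∑ i, ∑ k, Γ i k ^ 2) *
      ((t - s) * ∫ τ in s..t, kronForm 1 (Q τ) fun i => z i τ) := by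
  rw [Finset.sum_mul]
  refine Finset.sum_le_sum fun i _ => ?_
  refine (norm_sub_sq_le_mul_integral hst (fun τ hτ => hz.hasDerivAt i τ (hs.trans hτ.1))
    ((hz.intervalIntegrable_kronForm_one hQ hs (hs.trans hst)).const_mul (∑ k, Γ i k ^ 2))
    fun τ hτ => ?_).trans_eq ?_
  · have hτ0 := hs.trans hτ.1
    exact norm_map_sum_smul_sq_le (hQ.isPositive τ hτ0) (hQ.norm_le_one τ hτ0) _ _
  · rw [intervalIntegral.integral_const_mul, mul_left_comm]

theorem integral_kronForm_one_const_le (hz : IsDisagreement Q Γ r z) (hQ : IsContractiveGain Q)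
    (hs : 0 ≤ s) (hst : s ≤ t) :
    (∫ τ in s..t, kronForm 1 (Q τ) fun i => z i s) ≤
      2 * (1 + (∑ i, ∑ k, Γ i k ^ 2) * (t - s) ^ 2) *
        ∫ τ in s..t, kronForm 1 (Q τ) fun i => z i τ := by
  have ht := hs.trans hst
  set g := ∑ i, ∑ k, Γ i k ^ 2
  set D := ∫ τ in s..t, kronForm 1 (Q τ) fun i => z i τ
  have hint := hz.intervalIntegrable_kronForm_one hQ hs ht
  have hintConst : IntervalIntegrable (fun τ => kronForm 1 (Q τ) fun i => z i s) volume s t :=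
    hQ.intervalIntegrable_kronForm_one hs ht fun _ => continuousOn_const
  have hdisp : ∀ τ ∈ Set.Icc s t, ∑ i, ‖z i τ - z i s‖ ^ 2 ≤ g * ((t - s) * D) := by
    intro τ hτ
    have hmono : (∫ σ in s..τ, kronForm 1 (Q σ) fun i => z i σ) ≤ D :=
      intervalIntegral.integral_mono_interval le_rfl hτ.1 hτ.2
        ((ae_restrict_iff' measurableSet_Ioc).2 (.of_forall fun σ hσ =>
          kronForm_one_nonneg (hQ.isPositive σ (hs.trans hσ.1.le)) _)) hint
    have hD : 0 ≤ ∫ σ in s..τ, kronForm 1 (Q σ) fun i => z i σ :=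
      hQ.integral_kronForm_one_nonneg hs hτ.1 _
    refine (hz.sum_norm_sub_sq_le hQ hs hτ.1).trans ?_
    gcongr
    exact hτ.2
  calc (∫ τ in s..t, kronForm 1 (Q τ) fun i => z i s)
      ≤ ∫ τ in s..t, ((2 * kronForm 1 (Q τ) fun i => z i τ) + 2 * (g * ((t - s) * D))) := by
        refine intervalIntegral.integral_mono_on hst hintConst
          ((hint.const_mul 2).add intervalIntegrable_const) fun τ hτ => ?_
        have hτ0 := hs.trans hτ.1
        refine (kronForm_one_le_two_mul_add (hQ.isPositive τ hτ0) (hQ.norm_le_one τ hτ0) _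
          fun i => z i τ).trans ?_
        gcongr
        exact hdisp τ hτ
    _ = 2 * (1 + g * (t - s) ^ 2) * D := by
        rw [intervalIntegral.integral_add (hint.const_mul 2) intervalIntegrable_const,
          intervalIntegral.integral_const_mul, intervalIntegral.integral_const, smul_eq_mul]
        ring

theorem mul_sum_norm_sq_le (hz : IsDisagreement Q Γ r z) (hQ : IsContractiveGain Q)
    (hs : 0 ≤ s) (hst : s ≤ t) {ε : ℝ}
    (hε : ∀ v, ε * ‖v‖ ^ 2 ≤ ∫ τ in s..t, inner ℝ v (Q τ v)) :
    ε * ∑ i, ‖z i s‖ ^ 2 ≤ 2 * (1 + (∑ i, ∑ k, Γ i k ^ 2) * (t - s) ^ 2) *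
      ∫ τ in s..t, kronForm 1 (Q τ) fun i => z i τ := by
  refine le_trans ?_ (hz.integral_kronForm_one_const_le hQ hs hst)
  simp only [kronForm_one]
  rw [Finset.mul_sum, intervalIntegral.integral_finsetSum fun i _ => intervalIntegrable_inner_map
    (hQ.intervalIntegrable s t hs (hs.trans hst)) continuousOn_const continuousOn_const]
  exact Finset.sum_le_sum fun i _ => hε (z i s)

end

theorem sum_norm_sq_le_kronForm (hz : IsDisagreement Q Γ r z) (hP : IsLyapunovMatrix P Γ r)
    (ht : 0 ≤ t) : ∑ i, ‖z i t‖ ^ 2 ≤ kronForm P 1 fun i => z i t := by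
  classical
  rw [← kronForm_one_one]
  exact kronForm_mono (fun w hw => by simpa using hP.coercive w hw)
    ContinuousLinearMap.isPositive_one (hz.sum_smul_eq_zero t ht)

theorem exists_kronForm_le_one_sub_mul (hz : IsDisagreement Q Γ r z) (hQ : IsContractiveGain Q)
    (hP : IsLyapunovMatrix P Γ r) : ∃ κ > 0, ∀ {s T ε : ℝ}, 0 ≤ s → 0 ≤ T → 0 ≤ ε →
      (∀ v, ε * ‖v‖ ^ 2 ≤ ∫ τ in s..s + T, inner ℝ v (Q τ v)) →
      (kronForm P 1 fun i => z i (s + T)) ≤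
        (1 - κ * (ε / (1 + T ^ 2))) * kronForm P 1 fun i => z i s := by
  classical
  obtain ⟨C, hC, hPC⟩ := exists_dotProduct_mulVec_le P
  set g := ∑ i, ∑ k, Γ i k ^ 2
  have hg : 0 ≤ g := by positivity
  refine ⟨1 / (C * (1 + g)), by positivity, fun {s T ε} hs hT hε hexc => ?_⟩
  set V := fun t => kronForm P 1 fun i => z i t
  set D := ∫ τ in s..s + T, kronForm 1 (Q τ) fun i => z i τ
  have hst : s ≤ s + T := le_add_of_nonneg_right hT
  have hD : 0 ≤ D := hQ.integral_kronForm_one_nonneg hs hst z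
  have decrease : V (s + T) - V s ≤ -2 * D := hz.kronForm_sub_le hQ hP hs hst
  have excitation : ε * ∑ i, ‖z i s‖ ^ 2 ≤ 2 * (1 + g * T ^ 2) * D := by
    simpa using hz.mul_sum_norm_sq_le hQ hs hst hexc
  have upper : V s ≤ C * ∑ i, ‖z i s‖ ^ 2 := by
    rw [← kronForm_one_one, ← kronForm_smul]
    exact kronForm_mono (fun w _ => by simpa [smul_mulVec] using hPC w)
      ContinuousLinearMap.isPositive_one (hz.sum_smul_eq_zero s hs)
  have loss : 1 / (C * (1 + g)) * (ε / (1 + T ^ 2)) * V s ≤ 2 * D := by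
    rw [div_mul_div_comm, one_mul, div_mul_eq_mul_div, div_le_iff₀ (by positivity)]
    calc ε * V s ≤ C * (ε * ∑ i, ‖z i s‖ ^ 2) := by
          rw [mul_left_comm]
          gcongr
      _ ≤ C * (2 * (1 + g * T ^ 2) * D) := by gcongr
      _ ≤ C * (2 * ((1 + g) * (1 + T ^ 2)) * D) := by
          gcongr
          nlinarith [sq_nonneg T]
      _ = 2 * D * (C * (1 + g) * (1 + T ^ 2)) := by ring
  linarith

theorem tendsto_kronForm_zero (hz : IsDisagreement Q Γ r z) (hQ : IsContractiveGain Q)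
    (hQex : IsSufficientlyExciting Q) (hP : IsLyapunovMatrix P Γ r) :
    Tendsto (fun t => kronForm P 1 fun i => z i t) atTop (nhds 0) := by
  classical
  obtain ⟨ε, T, hε, hT, hexc, hsum⟩ := hQex
  obtain ⟨κ, hκ, hstep⟩ := hz.exists_kronForm_le_one_sub_mul hQ hP
  set V := fun t => kronForm P 1 fun i => z i t
  set τ := fun N => ∑ j ∈ Finset.range N, T j
  have hτ : ∀ N, 0 ≤ τ N := fun N => Finset.sum_nonneg fun j _ => hT j
  have hV : ∀ t, 0 ≤ t → 0 ≤ V t := fun t ht =>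
    (Finset.sum_nonneg fun i _ => sq_nonneg ‖z i t‖).trans (hz.sum_norm_sq_le_kronForm hP ht)
  have hlim : Tendsto (fun N => V (τ N)) atTop (nhds 0) := by
    refine tendsto_zero_of_succ_le_one_sub_mul (a := fun N => κ * (ε N / (1 + T N ^ 2)))
      (fun N => hV _ (hτ N)) (fun N => ?_) ?_
    · simpa only [τ, Finset.sum_range_succ] using hstep (hτ N) (hT N) (hε N) (hexc N)
    · simpa only [Finset.mul_sum] using hsum.const_mul_atTop hκ
  refine tendsto_order.2 ⟨fun η hη => ?_, fun η hη => ?_⟩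
  · filter_upwards [eventually_ge_atTop 0] with t ht using hη.trans_le (hV t ht)
  · obtain ⟨N, hN⟩ := (hlim.eventually_lt_const hη).exists
    filter_upwards [eventually_ge_atTop (τ N)] with t ht
    have hD := hQ.integral_kronForm_one_nonneg (hτ N) ht z
    linarith [hz.kronForm_sub_le hQ hP (hτ N) ht]

theorem tendsto_zero (hz : IsDisagreement Q Γ r z) (hQ : IsContractiveGain Q)
    (hQex : IsSufficientlyExciting Q) (hP : IsLyapunovMatrix P Γ r) (i : ι) :
    Tendsto (z i) atTop (nhds 0) := by
  have hsqrt := (hz.tendsto_kronForm_zero hQ hQex hP).sqrt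
  rw [Real.sqrt_zero] at hsqrt
  refine squeeze_zero_norm' ?_ hsqrt
  filter_upwards [eventually_ge_atTop 0] with t ht
  refine Real.le_sqrt_of_sq_le (le_trans ?_ (hz.sum_norm_sq_le_kronForm hP ht))
  exact Finset.single_le_sum (f := fun j => ‖z j t‖ ^ 2) (fun j _ => sq_nonneg _)
    (Finset.mem_univ i)

end IsDisagreement

end Disagreement

section Array

variable {p : ℕ} {E : Type*} [NormedAddCommGroup E] [InnerProductSpace ℝ E]
  {Γ : Matrix (Fin p) (Fin p) ℝ} {r : Fin p → ℝ}

theorem IsInterconnection.sum_filter_smul_sub (hΓ : IsInterconnection Γ) (y : Fin p → E) (b : E)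
    (i : Fin p) :
    ∑ j ∈ Finset.univ.filter (fun j => j ≠ i), Γ i j • (y j - y i) =
      ∑ j, Γ i j • (y j - b) := by
  have hdrop : ∑ j ∈ Finset.univ.filter (fun j => j ≠ i), Γ i j • (y j - y i) =
      ∑ j, Γ i j • (y j - y i) :=
    Finset.sum_filter_of_ne fun j _ hne hji => hne (by rw [hji, sub_self, smul_zero])
  rw [hdrop, ← sub_eq_zero, ← Finset.sum_sub_distrib]
  simp only [← smul_sub, sub_sub_sub_cancel_left]
  rw [← Finset.sum_smul, hΓ.sum_eq_zero, zero_smul]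

theorem sum_smul_sum_smul_eq_zero (hr : r ᵥ* Γ = 0) (v : Fin p → E) :
    ∑ i, r i • ∑ k, Γ i k • v k = 0 := by
  simp only [Finset.smul_sum, smul_smul]
  rw [Finset.sum_comm]
  simp only [← Finset.sum_smul]
  exact Finset.sum_eq_zero fun k _ => smul_eq_zero_of_left (congrFun hr k) _

theorem sum_smul_eq_of_hasDerivAt {Q : ℝ → E →L[ℝ] E} (hr : r ᵥ* Γ = 0) {x v : Fin p → ℝ → E}
    (hx : ∀ i t, 0 ≤ t → HasDerivAt (x i) (Q t (∑ k, Γ i k • v k t)) t) {t : ℝ} (ht : 0 ≤ t) :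
    ∑ i, r i • x i t = ∑ i, r i • x i 0 := by
  have hderiv : ∀ τ, 0 ≤ τ → HasDerivAt (fun τ => ∑ i, r i • x i τ) 0 τ := fun τ hτ => by
    rw [← map_zero (Q τ), ← sum_smul_sum_smul_eq_zero hr fun k => v k τ, map_sum]
    simp only [map_smul (Q τ) (r _)]
    exact HasDerivAt.fun_sum fun i _ => (hx i τ hτ).const_smul (r i)
  exact constant_of_has_deriv_right_zero
    (fun τ hτ => (hderiv τ hτ.1).continuousAt.continuousWithinAt)
    (fun τ hτ => (hderiv τ hτ.1).hasDerivWithinAt) t ⟨ht, le_rfl⟩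

theorem IsInterconnection.isDisagreement_sub {Q : ℝ → E →L[ℝ] E} (hΓ : IsInterconnection Γ)
    (hr1 : r ᵥ* Γ = 0) (hr2 : ∑ i, r i = 1) {x : Fin p → ℝ → E}
    (hx : ∀ i t, 0 ≤ t → HasDerivAt (x i)
      (Q t (∑ j ∈ Finset.univ.filter (fun j => j ≠ i), Γ i j • (x j t - x i t))) t) :
    IsDisagreement Q Γ r fun i t => x i t - ∑ j, r j • x j 0 := by
  have hx' : ∀ i t, 0 ≤ t →
      HasDerivAt (x i) (Q t (∑ k, Γ i k • (x k t - ∑ j, r j • x j 0))) t := fun i t ht => by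
    rw [← hΓ.sum_filter_smul_sub (fun k => x k t)]
    exact hx i t ht
  refine ⟨fun i t ht => (hx' i t ht).sub_const _, fun t ht => ?_⟩
  simp only [smul_sub, Finset.sum_sub_distrib]
  rw [← Finset.sum_smul, hr2, one_smul, sum_smul_eq_of_hasDerivAt hr1 hx' ht, sub_self]

theorem stmt5_general {Q : ℝ → E →L[ℝ] E} (hQ : IsContractiveGain Q)
    (hQex : IsSufficientlyExciting Q) (hΓ : IsInterconnection Γ) (hconn : ConnectedMat Γ)
    (hr1 : r ᵥ* Γ = 0) (hr2 : ∑ i, r i = 1) {x : Fin p → ℝ → E}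
    (hx : ∀ i t, 0 ≤ t → HasDerivAt (x i)
      (Q t (∑ j ∈ Finset.univ.filter (fun j => j ≠ i), Γ i j • (x j t - x i t))) t) (i : Fin p) :
    Tendsto (x i) atTop (nhds (∑ j, r j • x j 0)) := by
  obtain ⟨P, hP⟩ := hΓ.exists_isLyapunovMatrix hconn hr1 hr2
  exact tendsto_sub_nhds_zero_iff.1
    ((hΓ.isDisagreement_sub hr1 hr2 hx).tendsto_zero hQ hQex hP i)

end Array

theorem deltaCT_le_div {ε T : ℝ} (hε : 0 < ε) (hεT : ε ≤ T) : deltaCT ε T ≤ ε / (1 + T ^ 2) := by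
  have hT : 0 < T := hε.trans_le hεT
  rcases le_total T 1 with hT1 | hT1
  · refine (min_le_left _ _).trans (div_le_div_of_nonneg_left hε.le (by positivity) ?_)
    linarith [pow_le_one₀ (n := 2) hT.le hT1]
  · refine (min_le_right _ _).trans ?_
    rw [div_le_div_iff₀ (by positivity) (by positivity)]
    calc ε ^ 3 * (1 + T ^ 2) = ε * (ε ^ 2 * (1 + T ^ 2)) := by ring
      _ ≤ ε * (T ^ 2 * (T ^ 2 + T ^ 2)) := by gcongr; exact one_le_pow₀ hT1
      _ = ε * (2 * T ^ 4) := by ring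
      _ ≤ ε * (240 * T ^ 5) := by gcongr <;> norm_num

section Euclidean

variable {ι : Type*} [Fintype ι]

theorem eunorm_eq_norm (v : ι → ℝ) : eunorm v = ‖WithLp.toLp 2 v‖ := by
  simp [eunorm, EuclideanSpace.norm_eq]

theorem sigmaMin_le_eunorm_mulVec {κ : Type*} [Fintype κ] (M : Matrix κ ι ℝ)
    {v : ι → ℝ} (hv : eunorm v = 1) : sigmaMin M ≤ eunorm (M *ᵥ v) :=
  csInf_le ⟨0, by rintro _ ⟨w, -, rfl⟩; exact Real.sqrt_nonneg _⟩ ⟨v, hv, rfl⟩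

theorem exists_eunorm_eq_one_of_sigmaMin_pos {κ : Type*} [Fintype κ] {M : Matrix κ ι ℝ}
    (hM : 0 < sigmaMin M) : ∃ v : ι → ℝ, eunorm v = 1 := by
  by_contra! hv
  simp [sigmaMin, hv] at hM

variable [DecidableEq ι]

theorem specNorm_eq_norm (M : Matrix ι ι ℝ) :
    specNorm M = ‖toEuclideanCLM (𝕜 := ℝ) M‖ := by
  rw [← ContinuousLinearMap.sSup_unitClosedBall_eq_norm, specNorm]
  congr 1
  ext c
  simp only [eunorm_eq_norm, ← toEuclideanCLM_toLp, Set.mem_ofPred_eq, Set.mem_image,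
    mem_closedBall_zero_iff, (WithLp.toLp_surjective 2).exists, eq_comm]

theorem isPositive_toEuclideanCLM_iff {M : Matrix ι ι ℝ} :
    (toEuclideanCLM (𝕜 := ℝ) M).IsPositive ↔ M.PosSemidef := by
  rw [← ContinuousLinearMap.isPositive_toLinearMap_iff, coe_toEuclideanCLM_eq_toEuclideanLin,
    isPositive_toEuclideanLin_iff]

theorem sigmaMin_le_eigenvalues {M : Matrix ι ι ℝ} (hM : M.PosSemidef) (i : ι) :
    sigmaMin M ≤ hM.isHermitian.eigenvalues i := by
  have hunit : eunorm (hM.isHermitian.eigenvectorBasis i).ofLp = 1 := by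
    rw [eunorm_eq_norm]
    exact hM.isHermitian.eigenvectorBasis.orthonormal.1 i
  refine (sigmaMin_le_eunorm_mulVec M hunit).trans_eq ?_
  rw [hM.isHermitian.mulVec_eigenvectorBasis, eunorm_eq_norm, WithLp.toLp_smul, norm_smul,
    ← eunorm_eq_norm, hunit, mul_one, Real.norm_of_nonneg (hM.eigenvalues_nonneg i)]

open scoped MatrixOrder in
theorem sigmaMin_mul_norm_sq_le_inner {M : Matrix ι ι ℝ} (hM : M.PosSemidef)
    (v : EuclideanSpace ℝ ι) :
    sigmaMin M * ‖v‖ ^ 2 ≤ inner ℝ v (toEuclideanCLM (𝕜 := ℝ) M v) := by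
  have hle : algebraMap ℝ _ (sigmaMin M) ≤ M := by
    rw [algebraMap_le_iff_le_spectrum hM.isHermitian,
      hM.isHermitian.spectrum_real_eq_range_eigenvalues]
    rintro _ ⟨i, rfl⟩
    exact sigmaMin_le_eigenvalues hM i
  have hinner := (isPositive_toEuclideanCLM_iff.2 hle).inner_nonneg_right v
  rwa [map_sub, AlgHomClass.commutes, _root_.sub_apply, inner_sub_right,
    ContinuousLinearMap.algebraMap_apply, real_inner_smul_right, real_inner_self_eq_norm_sq,
    sub_nonneg] at hinner

end Euclidean

theorem intervalIntegrable_sum_smul {ι F : Type*} [Fintype ι] [NormedAddCommGroup F]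
    [NormedSpace ℝ F] {c : ι → ℝ → ℝ} {s t : ℝ} (hc : ∀ i, IntervalIntegrable (c i) volume s t)
    (v : ι → F) : IntervalIntegrable (fun τ => ∑ i, c i τ • v i) volume s t := by
  simpa only [Finset.sum_fn] using IntervalIntegrable.sum Finset.univ fun i _ =>
    (hc i).smul_continuousOn (continuousOn_const (c := v i))

section Gain

variable {ι : Type*} [Fintype ι] [DecidableEq ι] {Q : ℝ → Matrix ι ι ℝ}

theorem toEuclideanCLM_eq_sum_smul (M : Matrix ι ι ℝ) :
    toEuclideanCLM (𝕜 := ℝ) M =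
      ∑ ab : ι × ι, M ab.1 ab.2 • toEuclideanCLM (𝕜 := ℝ) (single ab.1 ab.2 1) := by
  conv_lhs => rw [matrix_eq_sum_single M]
  simp only [Fintype.sum_prod_type, map_sum, ← map_smul, smul_single, smul_eq_mul, mul_one]

theorem intervalIntegrable_toEuclideanCLM {s t : ℝ}
    (hQint : ∀ a b, IntervalIntegrable (fun τ => Q τ a b) volume s t) :
    IntervalIntegrable (fun τ => toEuclideanCLM (𝕜 := ℝ) (Q τ)) volume s t := by
  simp only [toEuclideanCLM_eq_sum_smul (Q _)]
  exact intervalIntegrable_sum_smul (c := fun (ab : ι × ι) τ => Q τ ab.1 ab.2)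
    (fun ab => hQint ab.1 ab.2) fun ab => toEuclideanCLM (𝕜 := ℝ) (single ab.1 ab.2 1)

theorem inner_toEuclideanCLM_of_integral {s t : ℝ}
    (hQint : ∀ a b, IntervalIntegrable (fun τ => Q τ a b) volume s t)
    (v : EuclideanSpace ℝ ι) :
    inner ℝ v (toEuclideanCLM (𝕜 := ℝ) (of fun a b => ∫ τ in s..t, Q τ a b) v) =
      ∫ τ in s..t, inner ℝ v (toEuclideanCLM (𝕜 := ℝ) (Q τ) v) := by
  have hentry : ∀ a b, IntervalIntegrable (fun τ => v a * (Q τ a b * v b)) volume s t :=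
    fun a b => ((hQint a b).mul_const _).const_mul _
  simp only [inner_toEuclideanCLM, dotProduct, mulVec, of_apply, Finset.mul_sum]
  rw [intervalIntegral.integral_finsetSum fun a _ => by
    simpa only [Finset.sum_fn] using IntervalIntegrable.sum Finset.univ fun b _ => hentry a b]
  refine Finset.sum_congr rfl fun a _ => ?_
  rw [intervalIntegral.integral_finsetSum fun b _ => hentry a b]
  simp only [intervalIntegral.integral_const_mul, intervalIntegral.integral_mul_const]

theorem posSemidef_of_integral {κ : Type*} [Finite κ] {Q : ℝ → Matrix κ κ ℝ} {s t : ℝ}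
    (hQ : ∀ τ ∈ Set.Icc s t, (Q τ).PosSemidef)
    (hQint : ∀ a b, IntervalIntegrable (fun τ => Q τ a b) volume s t) (hst : s ≤ t) :
    (of fun a b => ∫ τ in s..t, Q τ a b).PosSemidef := by
  classical
  have := Fintype.ofFinite κ
  refine .of_dotProduct_mulVec_nonneg ?_ fun v => ?_
  · ext a b
    refine intervalIntegral.integral_congr fun τ hτ => ?_
    exact (hQ τ (Set.uIcc_of_le hst ▸ hτ)).isHermitian.apply a b
  · have hinner := inner_toEuclideanCLM_of_integral hQint (WithLp.toLp 2 v)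
    rw [inner_toEuclideanCLM] at hinner
    rw [star_trivial, hinner]
    exact intervalIntegral.integral_nonneg hst fun τ hτ =>
      (isPositive_toEuclideanCLM_iff.2 (hQ τ hτ)).inner_nonneg_right _

theorem sigmaMin_mul_norm_sq_le_integral {s t : ℝ} (hQ : ∀ τ ∈ Set.Icc s t, (Q τ).PosSemidef)
    (hQint : ∀ a b, IntervalIntegrable (fun τ => Q τ a b) volume s t) (hst : s ≤ t)
    (v : EuclideanSpace ℝ ι) :
    sigmaMin (of fun a b => ∫ τ in s..t, Q τ a b) * ‖v‖ ^ 2 ≤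
      ∫ τ in s..t, inner ℝ v (toEuclideanCLM (𝕜 := ℝ) (Q τ) v) := by
  rw [← inner_toEuclideanCLM_of_integral hQint]
  exact sigmaMin_mul_norm_sq_le_inner (posSemidef_of_integral hQ hQint hst) v

end Gain

theorem isContractiveGain_toEuclideanCLM {n : ℕ} {Q : ℝ → Matrix (Fin n) (Fin n) ℝ}
    (hQ : ∀ t, 0 ≤ t → InQbar (Q t))
    (hQint : ∀ a b s t, IntervalIntegrable (fun τ => Q τ a b) volume s t) :
    IsContractiveGain fun t => toEuclideanCLM (𝕜 := ℝ) (Q t) where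
  isPositive t ht := isPositive_toEuclideanCLM_iff.2 (hQ t ht).1
  norm_le_one t ht := specNorm_eq_norm (Q t) ▸ (hQ t ht).2
  intervalIntegrable s t _ _ := intervalIntegrable_toEuclideanCLM fun a b => hQint a b s t

theorem SuffExcitingCT.isSufficientlyExciting {n : ℕ} {Q : ℝ → Matrix (Fin n) (Fin n) ℝ}
    (hQex : SuffExcitingCT Q) (hQ : ∀ t, 0 ≤ t → InQbar (Q t))
    (hQint : ∀ a b s t, IntervalIntegrable (fun τ => Q τ a b) volume s t) :
    IsSufficientlyExciting fun t => toEuclideanCLM (𝕜 := ℝ) (Q t) := by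
  obtain ⟨ε, T, hε, hT, hσ, hsum⟩ := hQex
  have hτ : ∀ i, 0 ≤ ∑ j ∈ Finset.range i, T j := fun i => Finset.sum_nonneg fun j _ => (hT j).le
  have hexc : ∀ i (v : EuclideanSpace ℝ (Fin n)), ε i * ‖v‖ ^ 2 ≤
      ∫ t in (∑ j ∈ Finset.range i, T j)..(∑ j ∈ Finset.range i, T j) + T i,
        inner ℝ v (toEuclideanCLM (𝕜 := ℝ) (Q t) v) := fun i v =>
    (mul_le_mul_of_nonneg_right (hσ i) (sq_nonneg _)).trans
      (sigmaMin_mul_norm_sq_le_integral (fun t ht => (hQ t ((hτ i).trans ht.1)).1)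
        (fun a b => hQint a b _ _) (le_add_of_nonneg_right (hT i).le) v)
  have hεT : ∀ i, ε i ≤ T i := fun i => by
    obtain ⟨v, hv⟩ := exists_eunorm_eq_one_of_sigmaMin_pos ((hε i).trans_le (hσ i))
    rw [eunorm_eq_norm] at hv
    simpa [hv] using (hexc i (WithLp.toLp 2 v)).trans
      ((isContractiveGain_toEuclideanCLM hQ hQint).integral_inner_le (hτ i)
        (le_add_of_nonneg_right (hT i).le) _)
  exact ⟨ε, T, fun i => (hε i).le, fun i => (hT i).le, hexc,
    tendsto_atTop_mono (fun N => Finset.sum_le_sum fun i _ => deltaCT_le_div (hε i) (hεT i)) hsum⟩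

theorem hasDerivAt_toLp {n : ℕ} {x : ℝ → Fin n → ℝ} {x' : Fin n → ℝ} {t : ℝ}
    (hx : ∀ a, HasDerivAt (fun s => x s a) (x' a) t) :
    HasDerivAt (fun s => WithLp.toLp 2 (x s)) (WithLp.toLp 2 x') t :=
  (PiLp.hasFDerivAt_toLp 2 (x t)).comp_hasDerivAt t (hasDerivAt_pi.2 hx)

theorem stmt5 {p n : ℕ}
    (Q : ℝ → Matrix (Fin n) (Fin n) ℝ)
    (hQ : ∀ t : ℝ, 0 ≤ t → InQbar (Q t))
    (hQint : ∀ a b : Fin n, ∀ s u : ℝ, IntervalIntegrable (fun t => Q t a b) volume s u)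
    (hQse : SuffExcitingCT Q)
    (Γ : Matrix (Fin p) (Fin p) ℝ)
    (hΓ : IsInterconnection Γ) (hconn : ConnectedMat Γ)
    (r : Fin p → ℝ) (hr1 : Matrix.vecMul r Γ = 0) (hr2 : ∑ i, r i = 1)
    (x : Fin p → ℝ → Fin n → ℝ)
    (hx : ∀ i, ∀ t : ℝ, 0 ≤ t → ∀ a : Fin n,
      HasDerivAt (fun s => x i s a)
        (((Q t).mulVec (∑ j ∈ Finset.univ.filter (fun j => j ≠ i), Γ i j • (x j t - x i t))) a) t)
    (xbar : Fin n → ℝ) (hxbar : xbar = ∑ j, r j • x j 0) :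
    ∀ i, Tendsto (fun t => eunorm (x i t - xbar)) atTop (nhds 0) := by
  subst hxbar
  intro i
  have hlim := stmt5_general (isContractiveGain_toEuclideanCLM hQ hQint)
    (hQse.isSufficientlyExciting hQ hQint) hΓ hconn hr1 hr2 (x := fun i t => WithLp.toLp 2 (x i t))
    (fun i t ht => by
      simpa only [toEuclideanCLM_toLp, ← WithLp.toLp_sub, ← WithLp.toLp_smul, ← WithLp.toLp_sum]
        using hasDerivAt_toLp (hx i t ht)) i
  simpa [eunorm_eq_norm] using (tendsto_sub_nhds_zero_iff.2 hlim).norm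
end
end
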